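/- arXiv:2406.19855 — 6 statements merged into one kernel-verified Lean document; each statement's English description precedes it below -/
import Mathlib

section
/- Let (Γ,·) be a finite group of odd order and let D be a complete digraph on |Γ|+1 vertices. Then for every Γ-labelling γ of D there exists a directed cycle in D that is balanced with respect to γ. -/
/-!
Let `m` be the order of the group `Γ`; the proof is by strong induction on `m`, for complete
digraphs with at least `m + 1` vertices.

Fix a vertex `s`. For a vertex set `T` and `v ∉ T` let `F v = reach γ s T v` be the set of products
of paths from `s` to `v` whose vertices other than `v` lie in `T`. Take `T` of maximal
cardinality `k` with `1 ≤ k ≤ m` and `|F v| ≥ k` for all `v ∉ T`; the set `{s}` is admissible. If `k = m`, all group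
elements occur in `F v`, and a path with the right product closes up with the arc `(v, s)`. Now let
`k < m`. Since adding a single vertex to `T` must fail, `|F v| = k` for all `v ∉ T`, and every
`v ∉ T` has an outneighbour `u ∉ T` for which the arc is tight: `F v * γ v u = F u`.

* Following tight arcs leads to a cycle, whose product lies in the right stabilizer of `F` at a
  vertex of the cycle. If some stabilizer is trivial, this gives a balanced cycle
  (`exists_balanced_of_rightStab_eq_bot`).
* If all stabilizers are nontrivial, they have order at least three because `m` is odd. For a
  non-tight arc `(v, u)` the sets `F u` and `F v * γ v u` are distinct sets of size `k`, each
  invariant under a subgroup of order at least three. Such sets differ in at least three elements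
  (`three_le_card_symmDiff`), so their union has at least `k + 2` elements, and both `v` and `u`
  could be added to `T`. Hence all arcs outside `T` are tight.
* In that case, after switching, all labels outside `T` lie in the stabilizer `H` of one set `F v₀`.
  As `|H|` divides both `k` and `m`, there are at least `m + 1 - k ≥ |H| + 1` vertices outside `T`,
  and the induction hypothesis for `H` applies.
-/

/-- The cumulative product of the arc-labels of the directed cycle
`c = [v₀, v₁, …, v_{ℓ-1}]` (with closing arc `(v_{ℓ-1}, v₀)`). -/
def cycleProd {V Γ : Type} [Monoid Γ] (γ : V → V → Γ) (c : List V) : Γ :=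
  ((c.zip (c.rotate 1)).map fun e => γ e.1 e.2).prod

/-- `c` is a directed cycle of the complete digraph (a list of at least two
pairwise distinct vertices) which is balanced with respect to the labelling `γ`:
the product of the labels along the cycle is the identity. -/
def IsBalancedCycle {V Γ : Type} [Monoid Γ] (γ : V → V → Γ) (c : List V) : Prop :=
  2 ≤ c.length ∧ c.Nodup ∧ cycleProd γ c = 1

/-! ### Cuts of unions of cosets -/

open scoped Pointwise in
theorem card_dvd_of_right_invariant {G : Type} [Group G] (L : Subgroup G) (C : Finset G)
    (hC : ∀ a ∈ C, ∀ h ∈ L, a * h ∈ C) : Nat.card L ∣ C.card := by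
  have h := Subgroup.card_mul_eq_card_subgroup_mul_card_quotient L (C : Set G)
  have h2 : (C : Set G) * (L : Set G) = C := by
    ext x
    constructor
    · rintro ⟨a, ha, h, hh, rfl⟩
      exact hC a ha h hh
    · intro hx
      exact ⟨x, hx, 1, L.one_mem, by simp⟩
  rw [h2] at h
  simp only [SetLike.coe_sort_coe, Nat.card_eq_fintype_card, Fintype.card_coe] at h
  exact ⟨_, h⟩

set_option maxHeartbeats 1000000 in
/-- In the bipartite graph with edge set `G` whose two vertex classes are the left cosets of `H`
and those of `K`, a pair `(A, B)` of unions of cosets is a vertex set and `symmDiff A B` is its edge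
cut. The graph is edge-transitive and all degrees are at least three, so a nonempty cut has at
least three edges. A smallest cut with smallest side is compared with the translate of itself in
which an inner edge is moved onto a cut edge. -/
theorem three_le_card_symmDiff {G : Type} [Group G] [Fintype G] [DecidableEq G]
    (H K : Subgroup G) (hH : 3 ≤ Nat.card H) (hK : 3 ≤ Nat.card K) (A B : Finset G)
    (hA : ∀ a ∈ A, ∀ h ∈ H, a * h ∈ A) (hB : ∀ a ∈ B, ∀ h ∈ K, a * h ∈ B) (hne : A ≠ B) :
    3 ≤ (symmDiff A B).card := by
  classical
  let P : Finset (Finset G × Finset G) := Finset.univ.filter fun p =>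
    (∀ a ∈ p.1, ∀ h ∈ H, a * h ∈ p.1) ∧ (∀ a ∈ p.2, ∀ h ∈ K, a * h ∈ p.2) ∧ p.1 ≠ p.2
  -- the factor `2 * card G + 1` makes this measure lexicographic: cut size first, then side size
  obtain ⟨⟨A₀, B₀⟩, hmem, hmin⟩ := P.exists_min_image
    (fun p => (symmDiff p.1 p.2).card * (2 * Fintype.card G + 1) + (p.1.card + p.2.card))
    ⟨(A, B), by simpa [P] using ⟨hA, hB, hne⟩⟩
  have hlex : ∀ A' B' : Finset G, (∀ a ∈ A', ∀ h ∈ H, a * h ∈ A') →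
      (∀ a ∈ B', ∀ h ∈ K, a * h ∈ B') → A' ≠ B' →
      (symmDiff A₀ B₀).card < (symmDiff A' B').card ∨
      ((symmDiff A₀ B₀).card = (symmDiff A' B').card ∧
        A₀.card + B₀.card ≤ A'.card + B'.card) := by
    intro A' B' h1 h2 h3
    have h := hmin (A', B') (by simpa [P] using ⟨h1, h2, h3⟩)
    simp only at h
    have hA' := A'.card_le_univ
    have hB' := B'.card_le_univ
    rcases lt_trichotomy (symmDiff A₀ B₀).card (symmDiff A' B').card with h4 | h4 | h4
    · exact Or.inl h4
    · rw [h4] at h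
      exact Or.inr ⟨h4, by omega⟩
    · exfalso
      have := Nat.mul_le_mul_right (2 * Fintype.card G + 1) (Nat.succ_le_of_lt h4)
      rw [Nat.succ_mul] at this
      omega
  clear hmin
  simp only [P, Finset.mem_filter, Finset.mem_univ, true_and] at hmem
  obtain ⟨hA₀, hB₀, hne₀⟩ := hmem
  clear P
  suffices hc : 3 ≤ (symmDiff A₀ B₀).card by
    rcases hlex A B hA hB hne with h | h <;> omega
  by_contra! hc
  have key : ∀ (L : Subgroup G) (C : Finset G), 3 ≤ Nat.card L →
      (∀ a ∈ C, ∀ h ∈ L, a * h ∈ C) → C.Nonempty → 3 ≤ C.card := by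
    intro L C hL hC hne
    exact hL.trans (Nat.le_of_dvd (Finset.card_pos.2 hne) (card_dvd_of_right_invariant L C hC))
  obtain ⟨e, he⟩ : (symmDiff A₀ B₀).Nonempty := by
    rw [Finset.nonempty_iff_ne_empty]
    intro h
    exact hne₀ (symmDiff_eq_bot.1 h)
  obtain ⟨i, hiA, hiB⟩ : ∃ i, i ∈ A₀ ∧ i ∈ B₀ := by
    by_contra! hdis
    have h1 : A₀ ⊆ symmDiff A₀ B₀ := fun x hx => by
      simp [Finset.mem_symmDiff, hx, hdis x hx]
    have h2 : B₀ ⊆ symmDiff A₀ B₀ := fun x hx => by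
      have : x ∉ A₀ := fun h => hdis x h hx
      simp [Finset.mem_symmDiff, hx, this]
    rcases Finset.mem_symmDiff.1 he with h | h
    · have := key H A₀ hH hA₀ ⟨e, h.1⟩
      have := Finset.card_le_card h1
      omega
    · have := key K B₀ hK hB₀ ⟨e, h.1⟩
      have := Finset.card_le_card h2
      omega
  -- left translation by `g` moves the inner edge `i` onto the cut edge `e`
  let g := e * i⁻¹
  have hginj : Function.Injective (fun x => g * x) := mul_right_injective g
  obtain ⟨A₁, hA₁⟩ : ∃ A₁, A₁ = A₀.image (fun x => g * x) := ⟨_, rfl⟩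
  obtain ⟨B₁, hB₁⟩ : ∃ B₁, B₁ = B₀.image (fun x => g * x) := ⟨_, rfl⟩
  have hcA : A₁.card = A₀.card := by rw [hA₁, Finset.card_image_of_injective _ hginj]
  have hcB : B₁.card = B₀.card := by rw [hB₁, Finset.card_image_of_injective _ hginj]
  have hcS : (symmDiff A₁ B₁).card = (symmDiff A₀ B₀).card := by
    rw [hA₁, hB₁, ← Finset.image_symmDiff _ _ hginj, Finset.card_image_of_injective _ hginj]
  have heA : e ∈ A₁ := by
    rw [hA₁]; exact Finset.mem_image.2 ⟨i, hiA, by simp [g]⟩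
  have heB : e ∈ B₁ := by
    rw [hB₁]; exact Finset.mem_image.2 ⟨i, hiB, by simp [g]⟩
  have hiA₁ : ∀ a ∈ A₁, ∀ h ∈ H, a * h ∈ A₁ := by
    intro a ha h hh
    rw [hA₁, Finset.mem_image] at ha ⊢
    obtain ⟨x, hx, rfl⟩ := ha
    exact ⟨x * h, hA₀ x hx h hh, by simp [mul_assoc]⟩
  have hiB₁ : ∀ a ∈ B₁, ∀ h ∈ K, a * h ∈ B₁ := by
    intro a ha h hh
    rw [hB₁, Finset.mem_image] at ha ⊢
    obtain ⟨x, hx, rfl⟩ := ha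
    exact ⟨x * h, hB₀ x hx h hh, by simp [mul_assoc]⟩
  clear_value g
  clear hA₁ hB₁ key hginj
  -- submodularity of the cut function
  have hsub : (symmDiff (A₀ ∩ A₁) (B₀ ∩ B₁)).card + (symmDiff (A₀ ∪ A₁) (B₀ ∪ B₁)).card ≤
      (symmDiff A₀ B₀).card + (symmDiff A₁ B₁).card := by
    rw [← Finset.card_union_add_card_inter, ← Finset.card_union_add_card_inter (symmDiff A₀ B₀)]
    refine Nat.add_le_add (Finset.card_le_card ?_) (Finset.card_le_card ?_) <;>
    · intro x
      simp only [Finset.mem_union, Finset.mem_inter, Finset.mem_symmDiff]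
      tauto
  have hU1 := Finset.card_union_add_card_inter A₀ A₁
  have hU2 := Finset.card_union_add_card_inter B₀ B₁
  have heCD : e ∈ symmDiff (A₀ ∩ A₁) (B₀ ∩ B₁) := by
    simp only [Finset.mem_symmDiff, Finset.mem_inter] at he ⊢
    tauto
  have hCne : A₀ ∩ A₁ ≠ B₀ ∩ B₁ := by
    intro h
    simp [h] at heCD
  -- `e` lies in exactly one of `A₀`, `B₀` but in both translates, so something is lost
  have hlt : (A₀ ∩ A₁).card + (B₀ ∩ B₁).card < A₀.card + B₀.card := by
    have h1 := Finset.card_le_card (Finset.inter_subset_left (s₁ := A₀) (s₂ := A₁))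
    have h2 := Finset.card_le_card (Finset.inter_subset_left (s₁ := B₀) (s₂ := B₁))
    by_contra! h3
    have h4 := Finset.eq_of_subset_of_card_le
      (Finset.inter_subset_left (s₁ := A₀) (s₂ := A₁)) (by omega)
    have h5 := Finset.eq_of_subset_of_card_le
      (Finset.inter_subset_left (s₁ := B₀) (s₂ := B₁)) (by omega)
    have h6 := Finset.eq_of_subset_of_card_le (Finset.inter_eq_left.1 h4) (by omega)
    have h7 := Finset.eq_of_subset_of_card_le (Finset.inter_eq_left.1 h5) (by omega)
    rw [h6, h7] at he
    simp [Finset.mem_symmDiff, heA, heB] at he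
  have hpos : 0 < (A₀ ∩ A₁).card + (B₀ ∩ B₁).card := by
    rcases Finset.mem_symmDiff.1 heCD with h | h
    · have := Finset.card_pos.2 ⟨e, h.1⟩
      omega
    · have := Finset.card_pos.2 ⟨e, h.1⟩
      omega
  have hbig : (symmDiff A₀ B₀).card < (symmDiff (A₀ ∩ A₁) (B₀ ∩ B₁)).card := by
    rcases hlex (A₀ ∩ A₁) (B₀ ∩ B₁)
      (fun a ha h hh => by
        rw [Finset.mem_inter] at ha ⊢
        exact ⟨hA₀ a ha.1 h hh, hiA₁ a ha.2 h hh⟩)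
      (fun a ha h hh => by
        rw [Finset.mem_inter] at ha ⊢
        exact ⟨hB₀ a ha.1 h hh, hiB₁ a ha.2 h hh⟩) hCne with h | h
    · exact h
    · omega
  have hiU : ∀ a ∈ A₀ ∪ A₁, ∀ h ∈ H, a * h ∈ A₀ ∪ A₁ := fun a ha h hh => by
    rw [Finset.mem_union] at ha ⊢
    exact ha.imp (fun k => hA₀ a k h hh) (fun k => hiA₁ a k h hh)
  have hiU' : ∀ a ∈ B₀ ∪ B₁, ∀ h ∈ K, a * h ∈ B₀ ∪ B₁ := fun a ha h hh => by
    rw [Finset.mem_union] at ha ⊢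
    exact ha.imp (fun k => hB₀ a k h hh) (fun k => hiB₁ a k h hh)
  have hUeq : A₀ ∪ A₁ = B₀ ∪ B₁ := by
    by_contra hne'
    rcases hlex _ _ hiU hiU' hne' with h | h <;> omega
  -- the complements inside the common union form another competing pair
  obtain ⟨U, hU⟩ : ∃ U, U = A₀ ∪ A₁ := ⟨_, rfl⟩
  have hAU : A₀ ⊆ U := hU ▸ Finset.subset_union_left
  have hBU : B₀ ⊆ U := by rw [hU, hUeq]; exact Finset.subset_union_left
  rw [← hUeq, ← hU] at hiU' hU2
  rw [← hU] at hiU hU1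
  have hdiff : symmDiff (U \ A₀) (U \ B₀) = symmDiff A₀ B₀ := by
    ext x
    have h1 := @hAU x
    have h2 := @hBU x
    simp only [Finset.mem_symmDiff, Finset.mem_sdiff]
    tauto
  have hfin := hlex (U \ A₀) (U \ B₀)
    (fun a ha h hh => by
      rw [Finset.mem_sdiff] at ha ⊢
      refine ⟨hiU a ha.1 h hh, fun hk => ha.2 ?_⟩
      simpa using hA₀ _ hk h⁻¹ (H.inv_mem hh))
    (fun a ha h hh => by
      rw [Finset.mem_sdiff] at ha ⊢
      refine ⟨hiU' a ha.1 h hh, fun hk => ha.2 ?_⟩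
      simpa using hB₀ _ hk h⁻¹ (K.inv_mem hh))
    (fun h => by
      rw [h, symmDiff_self] at hdiff
      rw [← hdiff] at he
      simp at he)
  rw [hdiff, Finset.card_sdiff_of_subset hAU, Finset.card_sdiff_of_subset hBU] at hfin
  have := Finset.card_le_card hAU
  have := Finset.card_le_card hBU
  omega

/-! ### Products along walks -/

/-- The product of the labels along the consecutive arcs of the list `l`, which is read as an open
walk (there is no closing arc). -/
def pathProd {V Γ : Type} [Monoid Γ] (γ : V → V → Γ) : List V → Γ
  | [] => 1
  | [_] => 1
  | x :: y :: l => γ x y * pathProd γ (y :: l)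

theorem cycleProd_cons {V Γ : Type} [Monoid Γ] (γ : V → V → Γ) (x : V) (l : List V) :
    cycleProd γ (x :: l) = pathProd γ (x :: l ++ [x]) := by
  have h : ∀ (l : List V) (x y : V),
      (((x :: l).zip (l ++ [y])).map fun e => γ e.1 e.2).prod = pathProd γ (x :: l ++ [y]) := by
    intro l
    induction l with
    | nil => intro x y; simp [pathProd]
    | cons z l ih =>
      intro x y
      have := ih z y
      simp only [List.cons_append] at this ⊢
      rw [List.zip_cons_cons, List.map_cons, List.prod_cons, this, pathProd]
  simpa [cycleProd] using h l x x

theorem pathProd_append_pair {V Γ : Type} [Monoid Γ] (γ : V → V → Γ) (l : List V) (v u : V) :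
    pathProd γ (l ++ [v, u]) = pathProd γ (l ++ [v]) * γ v u := by
  induction l with
  | nil => simp [pathProd]
  | cons x l ih =>
    cases l with
    | nil => simp [pathProd]
    | cons y l =>
      simp only [List.cons_append, pathProd] at ih ⊢
      rw [ih, mul_assoc]

/-- Switching a labelling by a potential `p` changes the product of a walk only by the potentials
at its ends, so it conjugates the product of a closed walk (the case `x = y`). The map `f`
allows passing to a subset of the vertices, and `ψ` to a subgroup of labels. -/
theorem pathProd_map {V W Γ Δ : Type} [Group Γ] [Group Δ] (ψ : Δ →* Γ) (f : W → V)
    (γ : V → V → Γ) (δ : W → W → Δ) (p : W → Γ)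
    (h : ∀ a b, ψ (δ a b) = p a * γ (f a) (f b) * (p b)⁻¹) (l : List W) (x y : W) :
    ψ (pathProd δ (x :: l ++ [y])) =
      p x * pathProd γ ((x :: l ++ [y]).map f) * (p y)⁻¹ := by
  induction l generalizing x with
  | nil => simp [pathProd, h]
  | cons z l ih =>
    have := ih z
    simp only [List.cons_append, List.map_cons, pathProd, map_mul] at this ⊢
    rw [this, h]
    group

theorem pathProd_congr {V Γ : Type} [Monoid Γ] (γ δ : V → V → Γ)
    (h : ∀ x y, x ≠ y → γ x y = δ x y) :
    ∀ l : List V, l.IsChain (· ≠ ·) → pathProd γ l = pathProd δ l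
  | [], _ => rfl
  | [_], _ => rfl
  | x :: y :: l, hl => by
    rw [List.isChain_cons_cons] at hl
    rw [pathProd, pathProd, h x y hl.1, pathProd_congr γ δ h (y :: l) hl.2]

/-! ### Products of paths through a vertex set -/

open Classical in
/-- The products of all paths that start at `s`, have all vertices but the last in `T`, and end
with an arc to `v`. It is used for `v ∉ T`, so that these walks really are paths. -/
noncomputable def reach {V Γ : Type} [Monoid Γ] [Fintype Γ] (γ : V → V → Γ) (s : V)
    (T : Finset V) (v : V) : Finset Γ :=
  Finset.univ.filter fun g =>
    ∃ l : List V, (s :: l).Nodup ∧ (∀ x ∈ s :: l, x ∈ T) ∧ pathProd γ (s :: l ++ [v]) = g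

section
variable {V Γ : Type} [Group Γ] [Fintype Γ] {γ : V → V → Γ} {s : V} {T : Finset V}

theorem mem_reach {v : V} {g : Γ} : g ∈ reach γ s T v ↔
    ∃ l : List V, (s :: l).Nodup ∧ (∀ x ∈ s :: l, x ∈ T) ∧
      pathProd γ (s :: l ++ [v]) = g := by
  simp [reach]

theorem reach_mono {T' : Finset V} (h : T ⊆ T') (v : V) :
    reach γ s T v ⊆ reach γ s T' v := by
  intro g hg
  rw [mem_reach] at hg ⊢
  obtain ⟨l, h1, h2, h3⟩ := hg
  exact ⟨l, h1, fun x hx => h (h2 x hx), h3⟩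

theorem reach_step [DecidableEq V] {v : V} (hv : v ∉ T) (u : V) {g : Γ}
    (hg : g ∈ reach γ s T v) : g * γ v u ∈ reach γ s (insert v T) u := by
  rw [mem_reach] at hg ⊢
  obtain ⟨l, h1, h2, h3⟩ := hg
  refine ⟨l ++ [v], ?_, ?_, ?_⟩
  · rw [← List.cons_append, List.nodup_append]
    refine ⟨h1, by simp, ?_⟩
    rintro a ha b hb rfl
    rw [List.mem_singleton] at hb
    exact hv (hb ▸ h2 _ ha)
  · intro x hx
    rw [← List.cons_append, List.mem_append, List.mem_singleton] at hx
    rw [Finset.mem_insert]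
    exact hx.symm.imp id (h2 x)
  · have := pathProd_append_pair γ (s :: l) v u
    rw [h3] at this
    simpa using this

theorem card_reach_step [DecidableEq V] {v : V} (hv : v ∉ T) (u : V) :
    (reach γ s T v).card ≤ (reach γ s (insert v T) u).card :=
  Finset.card_le_card_of_injOn (fun g => g * γ v u) (fun _ hg => reach_step hv u hg)
    (mul_left_injective _).injOn

theorem exists_balanced_of_mem_reach {v : V} (hv : v ∉ T) {g : Γ}
    (hg : g ∈ reach γ s T v) (h : g * γ v s = 1) : ∃ c, IsBalancedCycle γ c := by
  rw [mem_reach] at hg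
  obtain ⟨l, h1, h2, h3⟩ := hg
  refine ⟨s :: (l ++ [v]), by simp, ?_, ?_⟩
  · rw [← List.cons_append, List.nodup_append]
    refine ⟨h1, by simp, ?_⟩
    rintro a ha b hb rfl
    rw [List.mem_singleton] at hb
    exact hv (hb ▸ h2 _ ha)
  · have := pathProd_append_pair γ (s :: l) v s
    rw [h3, h] at this
    rw [cycleProd_cons, ← this]
    simp

end

/-! ### Stabilizers and tight cycles -/

/-- The stabilizer of `A` under right multiplication. -/
def rightStab {Γ : Type} [Group Γ] (A : Finset Γ) : Subgroup Γ where
  carrier := {g | ∀ a, a ∈ A ↔ a * g ∈ A}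
  mul_mem' := by
    intro g h hg hh a
    rw [hg a, hh (a * g), mul_assoc]
  one_mem' := by simp
  inv_mem' := by
    intro g hg a
    rw [hg (a * g⁻¹)]
    simp

theorem mem_rightStab {Γ : Type} [Group Γ] {A : Finset Γ} {g : Γ} :
    g ∈ rightStab A ↔ ∀ a, a ∈ A ↔ a * g ∈ A := Iff.rfl

/-- If the label of every arc `(v, φ v)` maps `F v` onto `F (φ v)` by right multiplication, the
product around a cycle of `φ` stabilizes the set at each of its vertices. All stabilizers along a
`φ`-orbit are conjugate, so a trivial one forces the cycle reached by the orbit to be balanced. -/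
theorem exists_balanced_of_rightStab_eq_bot {V Γ : Type} [Finite V] [Group Γ] (γ : V → V → Γ)
    (F : V → Finset Γ) (W : Set V) (φ : V → V) (hφW : ∀ v ∈ W, φ v ∈ W)
    (hφ : ∀ v ∈ W, φ v ≠ v) (htight : ∀ v ∈ W, ∀ a, a ∈ F v ↔ a * γ v (φ v) ∈ F (φ v))
    (v : V) (hv : v ∈ W) (hst : ∀ g ∈ rightStab (F v), g = 1) :
    ∃ c, IsBalancedCycle γ c := by
  have hiter : ∀ (n : ℕ) (x : V), x ∈ W → ∀ a, a ∈ F x ↔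
      a * pathProd γ (List.iterate φ x (n + 1)) ∈ F (φ^[n] x) := by
    intro n
    induction n with
    | zero => intro x _ a; simp [List.iterate, pathProd]
    | succ n ih =>
      intro x hx a
      rw [htight x hx, ih (φ x) (hφW x hx), Function.iterate_succ_apply, mul_assoc]
      rfl
  have hW : ∀ n, φ^[n] v ∈ W := by
    intro n
    induction n with
    | zero => exact hv
    | succ n ih => rw [Function.iterate_succ_apply']; exact hφW _ ih
  obtain ⟨i, j, hij, heq⟩ : ∃ i j : ℕ, i < j ∧ φ^[i] v = φ^[j] v := by
    obtain ⟨i, j, hne, h⟩ := Finite.exists_ne_map_eq_of_infinite (fun n : ℕ => φ^[n] v)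
    rcases lt_or_gt_of_ne hne with h' | h'
    · exact ⟨i, j, h', h⟩
    · exact ⟨j, i, h', h.symm⟩
  obtain ⟨x, hx⟩ : ∃ x, x = φ^[i] v := ⟨_, rfl⟩
  have hxW : x ∈ W := hx ▸ hW i
  have hper : x ∈ Function.periodicPts φ := by
    refine ⟨j - i, by omega, ?_⟩
    rw [Function.IsPeriodicPt, Function.IsFixedPt, hx, ← Function.iterate_add_apply,
      Nat.sub_add_cancel hij.le, heq]
  have hpos := Function.minimalPeriod_pos_of_mem_periodicPts hper
  have hret := Function.iterate_minimalPeriod (f := φ) (x := x)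
  have hnd : (List.iterate φ x (Function.minimalPeriod φ x)).Nodup := by
    rw [← List.range_map_iterate]
    refine List.Nodup.map_on ?_ List.nodup_range
    intro a ha b hb hab
    exact Function.iterate_injOn_Iio_minimalPeriod (by simpa using ha) (by simpa using hb) hab
  have hne1 : Function.minimalPeriod φ x ≠ 1 := by
    rw [Ne, Function.minimalPeriod_eq_one_iff_isFixedPt]
    exact hφ x hxW
  obtain ⟨n, hn⟩ : ∃ n, Function.minimalPeriod φ x = n + 1 := ⟨_, (Nat.sub_add_cancel hpos).symm⟩
  rw [hn] at hret hnd hne1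
  refine ⟨_, by rw [List.length_iterate]; omega, hnd, ?_⟩
  have hcp : cycleProd γ (List.iterate φ x (n + 1)) =
      pathProd γ (List.iterate φ x (n + 1 + 1)) := by
    rw [List.iterate_add φ x (n + 1) 1, hret]
    exact cycleProd_cons γ x _
  rw [hcp]
  have h1 := hiter (n + 1) x hxW
  rw [hret] at h1
  have h2 := hiter i v hv
  rw [← hx] at h2
  generalize pathProd γ (List.iterate φ x (n + 1 + 1)) = g at h1 ⊢
  generalize pathProd γ (List.iterate φ v (i + 1)) = q at h2
  have h3 := hst (q * g * q⁻¹) (by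
    rw [mem_rightStab]
    intro a
    rw [h2, h1, h2 (a * (q * g * q⁻¹))]
    simp [mul_assoc])
  simpa using h3

theorem three_le_card_of_odd {Γ : Type} [Group Γ] [Fintype Γ] (hodd : Odd (Fintype.card Γ))
    (H : Subgroup Γ) {g : Γ} (hg : g ∈ H) (hg1 : g ≠ 1) : 3 ≤ Nat.card H := by
  have hd : Nat.card H ∣ Fintype.card Γ := by
    rw [← Nat.card_eq_fintype_card]; exact H.card_subgroup_dvd_card
  have ho : Odd (Nat.card H) := Odd.of_dvd_nat hodd hd
  have h1 : Nat.card H ≠ 1 := by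
    intro h
    rw [Subgroup.card_eq_one] at h
    rw [h, Subgroup.mem_bot] at hg
    exact hg1 hg
  obtain ⟨r, hr⟩ := ho
  omega

/-! ### The induction on the group order -/

set_option maxHeartbeats 1000000 in
/-- The labels `γ v v` belong to no arc; fixing them to be `1` makes every statement about pairs of
vertices hold on the diagonal too. -/
theorem exists_balanced_of_diag_one (n : ℕ) : ∀ (Γ V : Type) [Group Γ] [Fintype Γ] [Fintype V],
    Fintype.card Γ = n → Odd n → n + 1 ≤ Fintype.card V →
    ∀ γ : V → V → Γ, (∀ v, γ v v = 1) → ∃ c, IsBalancedCycle γ c := by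
  induction n using Nat.strong_induction_on with
  | _ m ih =>
  intro Γ V _ _ _ hΓ hodd hV γ hdiag
  classical
  obtain ⟨s⟩ : Nonempty V := Fintype.card_pos_iff.1 (by omega)
  have hm1 : 1 ≤ m := hodd.pos
  have hcard : ∀ A : Finset Γ, A.card ≤ m := fun A => hΓ ▸ A.card_le_univ
  have hout : ∀ T : Finset V, T.card ≤ m → ∃ v, v ∉ T := by
    intro T hT
    by_contra! h
    rw [← Finset.eq_univ_iff_forall] at h
    rw [h, Finset.card_univ] at hT
    omega
  obtain ⟨T, hT, hmax⟩ := (Finset.univ.filter fun T : Finset V =>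
      1 ≤ T.card ∧ T.card ≤ m ∧ ∀ v ∉ T, T.card ≤ (reach γ s T v).card).exists_max_image
      Finset.card ⟨{s}, by
        simp only [Finset.mem_filter, Finset.mem_univ, true_and, Finset.card_singleton]
        refine ⟨le_rfl, hm1, fun v _ => Finset.card_pos.2 ⟨γ s v, mem_reach.2 ⟨[], ?_⟩⟩⟩
        simp [pathProd]⟩
  simp only [Finset.mem_filter, Finset.mem_univ, true_and] at hT hmax
  obtain ⟨hT1, hTm, hreach⟩ := hT
  -- maximality of `T`
  have hext : ∀ T' : Finset V, T.card < T'.card → T'.card ≤ m →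
      (∀ v ∉ T', T'.card ≤ (reach γ s T' v).card) → False := by
    intro T' h1 h2 h3
    have := hmax T' ⟨by omega, h2, h3⟩
    omega
  -- if `T` has `m` vertices, every group element is the product of a path from `s` to `v`
  rcases hTm.eq_or_lt with hTm | hTm
  · obtain ⟨v, hv⟩ := hout T hTm.le
    have hu : reach γ s T v = Finset.univ := by
      rw [← Finset.card_eq_iff_eq_univ]
      have := hreach v hv
      have := hcard (reach γ s T v)
      omega
    exact exists_balanced_of_mem_reach (s := s) (g := (γ v s)⁻¹) hv (by rw [hu]; simp) (by simp)
  have hins : ∀ v ∉ T, (insert v T).card = T.card + 1 := fun v hv =>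
    Finset.card_insert_of_notMem hv
  have heq : ∀ v ∉ T, (reach γ s T v).card = T.card := by
    intro v hv
    by_contra hne
    refine hext (insert v T) ?_ ?_ ?_
    · rw [hins v hv]; omega
    · rw [hins v hv]; omega
    · intro u _
      have := hreach v hv
      have := card_reach_step (γ := γ) (s := s) hv u
      rw [hins v hv]; omega
  have hsub : ∀ v ∉ T, ∀ u, (reach γ s T v).image (· * γ v u) ⊆ reach γ s (insert v T) u := by
    intro v hv u g hg
    obtain ⟨a, ha, rfl⟩ := Finset.mem_image.1 hg
    exact reach_step hv u ha
  have himg : ∀ v ∉ T, ∀ u, ((reach γ s T v).image (· * γ v u)).card = T.card := by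
    intro v hv u
    rw [Finset.card_image_of_injective _ (mul_left_injective _), heq v hv]
  have htight_of : ∀ v u, (reach γ s T v).image (· * γ v u) = reach γ s T u →
      ∀ a, a ∈ reach γ s T v ↔ a * γ v u ∈ reach γ s T u := by
    intro v u h a
    rw [← h]
    exact (Function.Injective.mem_finset_image (mul_left_injective (γ v u))).symm
  -- otherwise `insert v T` would contradict the maximality of `T`
  have hnext : ∀ v, ∃ u, v ∉ T → u ∉ T ∧ u ≠ v ∧
      ∀ a, a ∈ reach γ s T v ↔ a * γ v u ∈ reach γ s T u := by
    intro v
    by_contra! hno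
    obtain ⟨hv, -⟩ := hno v
    refine hext (insert v T) ?_ ?_ ?_
    · rw [hins v hv]; omega
    · rw [hins v hv]; omega
    · intro u hu
      rw [Finset.mem_insert, not_or] at hu
      rw [hins v hv]
      by_contra! hlt
      have h1 := Finset.eq_of_subset_of_card_le (hsub v hv u) (by rw [himg v hv]; omega)
      have h2 := Finset.eq_of_subset_of_card_le
        (reach_mono (γ := γ) (s := s) (Finset.subset_insert v T) u) (by rw [heq u hu.2]; omega)
      obtain ⟨a, ha⟩ := (hno u).2 hu.2 hu.1
      have := htight_of v u (h1.trans h2.symm) a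
      tauto
  by_cases htriv : ∃ v, v ∉ T ∧ ∀ g ∈ rightStab (reach γ s T v), g = 1
  · obtain ⟨v, hv, hst⟩ := htriv
    choose φ hφ using hnext
    exact exists_balanced_of_rightStab_eq_bot γ (reach γ s T) {v | v ∉ T} φ
      (fun v hv => (hφ v hv).1) (fun v hv => (hφ v hv).2.1) (fun v hv => (hφ v hv).2.2) v hv hst
  push Not at htriv
  -- a non-tight arc `(v, u)` gains two products at `u`, hence pays for adding both `v` and `u`
  have hall : ∀ v ∉ T, ∀ u ∉ T, ∀ a, a ∈ reach γ s T v ↔ a * γ v u ∈ reach γ s T u := by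
    intro v hv u hu
    rcases eq_or_ne u v with rfl | huv
    · simp [hdiag]
    by_contra hnt
    obtain ⟨A, hA⟩ : ∃ A, A = reach γ s T u := ⟨_, rfl⟩
    obtain ⟨B, hB⟩ : ∃ B, B = (reach γ s T v).image (· * γ v u) := ⟨_, rfl⟩
    have hAB : A ≠ B := fun h => hnt (htight_of v u (by rw [← hA, ← hB, h]))
    have hAc : A.card = T.card := by rw [hA, heq u hu]
    have hBc : B.card = T.card := by rw [hB, himg v hv u]
    obtain ⟨g, hg, hg1⟩ := htriv u hu
    obtain ⟨h, hh, hh1⟩ := htriv v hv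
    rw [← hA] at hg
    have hh' : (γ v u)⁻¹ * h * γ v u ∈ rightStab B := by
      rw [mem_rightStab] at hh ⊢
      have hm : ∀ a, a ∈ B ↔ a * (γ v u)⁻¹ ∈ reach γ s T v := by
        intro a
        rw [hB, Finset.mem_image]
        constructor
        · rintro ⟨b, hb, rfl⟩
          simpa using hb
        · intro ha
          exact ⟨_, ha, by simp⟩
      intro a
      rw [hm, hm, hh]
      simp [mul_assoc]
    have hS := three_le_card_symmDiff (rightStab A) (rightStab B)
      (three_le_card_of_odd (hΓ ▸ hodd) _ hg hg1)
      (three_le_card_of_odd (hΓ ▸ hodd) _ hh' (by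
        intro h0
        apply hh1
        have : h = γ v u * ((γ v u)⁻¹ * h * γ v u) * (γ v u)⁻¹ := by group
        rw [this, h0]; simp))
      A B (fun a ha h hh => (hh a).1 ha) (fun a ha h hh => (hh a).1 ha) hAB
    have hun : T.card + 2 ≤ (A ∪ B).card := by
      have h1 := Finset.card_union_add_card_inter A B
      have h2 : symmDiff A B ∪ (A ∩ B) = A ∪ B := by
        ext x
        simp only [Finset.mem_union, Finset.mem_inter, Finset.mem_symmDiff]
        tauto
      have h3 := Finset.card_union_of_disjoint
        (disjoint_symmDiff_inf (α := Finset Γ) A B)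
      rw [Finset.inf_eq_inter, h2] at h3
      omega
    have hle : (A ∪ B).card ≤ (reach γ s (insert v T) u).card := by
      refine Finset.card_le_card (Finset.union_subset ?_ ?_)
      · rw [hA]; exact reach_mono (Finset.subset_insert v T) u
      · rw [hB]; exact hsub v hv u
    have hu' : u ∉ insert v T := by simp [huv, hu]
    have hc2 : (insert u (insert v T)).card = T.card + 2 := by
      rw [Finset.card_insert_of_notMem hu', hins v hv]
    refine hext (insert u (insert v T)) (by omega) ?_ ?_
    · have := hcard (A ∪ B)
      omega
    · intro w _
      have := card_reach_step (γ := γ) (s := s) hu' w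
      omega
  -- after switching at the vertices outside `T`, all labels there lie in a proper subgroup
  obtain ⟨v₀, hv₀⟩ := hout T hTm.le
  obtain ⟨H, hH⟩ : ∃ H, H = rightStab (reach γ s T v₀) := ⟨_, rfl⟩
  have hmem : ∀ v u : {v // v ∉ T}, γ v₀ v * γ v u * (γ v₀ u)⁻¹ ∈ H := by
    rintro ⟨v, hv⟩ ⟨u, hu⟩
    rw [hH, mem_rightStab]
    intro a
    rw [hall v₀ hv₀ v hv, hall v hv u hu, hall v₀ hv₀ u hu (a * _)]
    simp [mul_assoc]
  have hHd : Nat.card H ∣ m := by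
    rw [← hΓ, ← Nat.card_eq_fintype_card]; exact H.card_subgroup_dvd_card
  have hHT : Nat.card H ∣ T.card := by
    rw [← heq v₀ hv₀]
    refine card_dvd_of_right_invariant H _ ?_
    intro a ha h hh
    rw [hH] at hh
    exact (hh a).1 ha
  have hHle : Nat.card H ≤ m - T.card := Nat.le_of_dvd (by omega) (Nat.dvd_sub hHd hHT)
  have hVc : Fintype.card {v // v ∉ T} = Fintype.card V - T.card := by
    rw [Fintype.card_subtype_compl]; simp
  obtain ⟨c, hc2, hcn, hc1⟩ := ih (Nat.card H) (by omega) H {v // v ∉ T}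
    (Nat.card_eq_fintype_card).symm (Odd.of_dvd_nat hodd hHd) (by omega)
    (fun v u => ⟨_, hmem v u⟩) (by intro v; simp [hdiag])
  refine ⟨c.map Subtype.val, by simpa using hc2, hcn.map Subtype.val_injective, ?_⟩
  obtain _ | ⟨x, l⟩ := c
  · simp at hc2
  rw [cycleProd_cons] at hc1
  have h := pathProd_map H.subtype Subtype.val γ (fun v u => ⟨_, hmem v u⟩)
    (fun v => γ v₀ v) (fun a b => rfl) l x x
  rw [hc1, map_one] at h
  rw [List.map_cons, cycleProd_cons]
  have h' := h.symm
  rw [conj_eq_one_iff] at h'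
  simpa using h'

/-- For a finite group `Γ` of odd order and a complete digraph `D`
on `|Γ| + 1` vertices, every `Γ`-labelling of `D` admits a balanced directed cycle. -/
theorem balanced_cycle_of_odd_order_group {Γ V : Type} [Group Γ] [Fintype Γ]
    [Fintype V] [DecidableEq V]
    (hodd : Odd (Fintype.card Γ))
    (hV : Fintype.card V = Fintype.card Γ + 1)
    (γ : V → V → Γ) :
    ∃ c : List V, IsBalancedCycle γ c := by
  obtain ⟨c, h2, hn, h1⟩ := exists_balanced_of_diag_one _ Γ V rfl hodd hV.ge
    (fun v u => if v = u then 1 else γ v u) (by simp)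
  refine ⟨c, h2, hn, ?_⟩
  obtain _ | ⟨x, l⟩ := c
  · simp at h2
  rw [cycleProd_cons] at h1 ⊢
  rw [← h1]
  refine pathProd_congr _ _ (fun a b hab => by simp [hab]) _ ?_
  -- consecutive vertices of the closed walk are distinct because the cycle has length at least two
  rw [List.isChain_append]
  refine ⟨hn.isChain, by simp, ?_⟩
  obtain rfl | ⟨l', z, rfl⟩ := List.eq_nil_or_concat l
  · simp at h2
  · intro a ha b hb
    rw [List.concat_eq_append, ← List.cons_append, List.getLast?_concat] at ha
    simp only [Option.mem_def, Option.some.injEq] at ha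
    simp only [List.head?_cons, Option.mem_def, Option.some.injEq] at hb
    subst ha hb
    rintro rfl
    simp at hn
end

section
/- Let q be a positive integer, let g be a generator of the cyclic group Z_q, and let D be the complete digraph on the linearly ordered vertex set {0,1,…,q−1}. Define a Z_q-labelling γ of D by γ(i,j) = g if i < j and γ(i,j) = 0 (the identity) if i > j. Then no directed cycle of D is balanced with respect to γ. In particular, n(Z_q) ≥ q+1, i.e. there is a Z_q-labelling of the complete digraph on q vertices with no balanced cycle. -/
/-!
The sum of the labels along a cycle is `k • g`, where `k` is the number of arcs of the cycle that
ascend (`cycleSum_ascents`). A cycle has at least one ascent, the arc leaving its smallest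
vertex (`ascents_pos`), and at least one arc that is not an ascent, the arc leaving its largest
vertex (`ascents_lt_length`). As a cycle has at most `q` vertices, `0 < k < q`. A generator of
`ZMod q` has additive order `q`, so `k • g ≠ 0`.
-/

/-- The cumulative sum of the arc-labels of the directed cycle
`c = [v₀, v₁, …, v_{ℓ-1}]` (with closing arc `(v_{ℓ-1}, v₀)`). -/
def cycleSum {V Γ : Type} [AddMonoid Γ] (γ : V → V → Γ) (c : List V) : Γ :=
  ((c.zip (c.rotate 1)).map fun e => γ e.1 e.2).sum

/-- `c` is a directed cycle of the complete digraph (a list of at least two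
pairwise distinct vertices) which is balanced with respect to the labelling `γ`:
the sum of the labels along the cycle is the identity (zero). -/
def IsBalancedCycleAdd {V Γ : Type} [AddMonoid Γ] (γ : V → V → Γ) (c : List V) : Prop :=
  2 ≤ c.length ∧ c.Nodup ∧ cycleSum γ c = 0

/-- The number of arcs `(u, v)` of the directed cycle `l`, closing arc included, with `u < v`. -/
def ascents {V : Type} [LinearOrder V] (l : List V) : ℕ :=
  (l.zip (l.rotate 1)).countP fun e => e.1 < e.2

lemma cycleSum_ascents {V Γ : Type} [LinearOrder V] [AddMonoid Γ] (g : Γ) (l : List V) :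
    cycleSum (fun i j => if i < j then g else 0) l = ascents l • g := by
  unfold cycleSum ascents
  induction l.zip (l.rotate 1) with
  | nil => simp
  | cons e t ih =>
    by_cases h : e.1 < e.2
    · simp [h, ih, succ_nsmul']
    · simp [h, ih]

/-- The arc leaving position `i` of a cycle ends at the cyclically next position. -/
lemma arc_mem {V : Type} (l : List V) (i : ℕ) (hi : i < l.length) :
    (l[i], l[(i + 1) % l.length]'(Nat.mod_lt _ (by omega))) ∈ l.zip (l.rotate 1) := by
  rw [List.mem_iff_getElem]
  exact ⟨i, by simpa using hi, by simp [List.getElem_rotate]⟩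

/-- The arc leaving the smallest vertex is an ascent; distinctness of the vertices is what makes
the inequality strict. -/
lemma ascents_pos {V : Type} [LinearOrder V] {l : List V} (h2 : 2 ≤ l.length) (hnd : l.Nodup) :
    0 < ascents l := by
  have : Nonempty (Fin l.length) := ⟨⟨0, by omega⟩⟩
  obtain ⟨⟨i, hi⟩, hmin⟩ := Finite.exists_min fun i : Fin l.length => l[i]
  refine List.countP_pos_iff.2 ⟨_, arc_mem l i hi, ?_⟩
  have hm : (i + 1) % l.length < l.length := Nat.mod_lt _ (by omega)
  refine decide_eq_true (lt_of_le_of_ne (hmin ⟨_, hm⟩) fun h => ?_)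
  have hij : i = (i + 1) % l.length := (hnd.getElem_inj_iff).1 h
  rcases Nat.lt_or_ge (i + 1) l.length with h1 | h1
  · rw [Nat.mod_eq_of_lt h1] at hij
    omega
  · rw [show i + 1 = l.length by omega, Nat.mod_self] at hij
    omega

/-- The arc leaving the largest vertex is not an ascent. -/
lemma ascents_lt_length {V : Type} [LinearOrder V] {l : List V} (h2 : 2 ≤ l.length) :
    ascents l < l.length := by
  have : Nonempty (Fin l.length) := ⟨⟨0, by omega⟩⟩
  obtain ⟨⟨i, hi⟩, hmax⟩ := Finite.exists_max fun i : Fin l.length => l[i]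
  have hz : (l.zip (l.rotate 1)).length = l.length := by simp
  have hle : ascents l ≤ (l.zip (l.rotate 1)).length := List.countP_le_length
  refine lt_of_le_of_ne (hz ▸ hle) fun h => ?_
  have hall := List.countP_eq_length.1 (h.trans hz.symm) _ (arc_mem l i hi)
  exact absurd (of_decide_eq_true hall) (not_lt.2 (hmax ⟨_, Nat.mod_lt _ (by omega)⟩))

/-- For a positive integer `q` and a generator `g` of `ℤ_q`, the
labelling of the complete digraph on the ordered vertex set `{0, …, q-1}` assigning
`g` to increasing arcs and `0` to decreasing arcs has no balanced cycle.
In particular, there is a `ℤ_q`-labelling of the complete digraph on `q` vertices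
with no balanced cycle, i.e. `n(ℤ_q) ≥ q + 1`. -/
theorem no_balanced_cycle_lower_bound (q : ℕ) (hq : 0 < q) (g : ZMod q)
    (hg : AddSubgroup.zmultiples g = ⊤) :
    (¬ ∃ c : List (Fin q),
        IsBalancedCycleAdd (fun i j => if i < j then g else 0) c) ∧
    ∃ γ' : Fin q → Fin q → ZMod q,
      ¬ ∃ c : List (Fin q), IsBalancedCycleAdd γ' c := by
  have main : ¬ ∃ c : List (Fin q),
      IsBalancedCycleAdd (fun i j => if i < j then g else 0) c := by
    rintro ⟨c, h2, hnd, hsum⟩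
    have hord : addOrderOf g = q := by
      rw [← Nat.card_zmultiples, hg, AddSubgroup.card_top, Nat.card_zmod]
    rw [cycleSum_ascents, ← addOrderOf_dvd_iff_nsmul_eq_zero, hord] at hsum
    have hlen : c.length ≤ q := by simpa using hnd.length_le_card
    have hle := Nat.le_of_dvd (ascents_pos h2 hnd) hsum
    have hlt := ascents_lt_length h2
    omega
  exact ⟨main, _, main⟩
end

section
/- Let q be a positive integer, let g be a generator of Z_q, and let D be the complete digraph on the linearly ordered vertex set {0,1,…,q}. Define a Z_q-labelling γ of D by γ(i,j) = g if i < j and γ(i,j) = 0 (the identity) if i > j. Then there exists an arc e of D such that the digraph D − e (with the restriction of γ) contains no balanced directed cycle. -/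
/-- The arc `(a, b)` is traversed by the directed cycle `c`
(i.e. `b` follows `a` along the cycle, including the closing arc). -/
def cycleUsesArc {V : Type} (c : List V) (a b : V) : Prop :=
  (a, b) ∈ c.zip (c.rotate 1)

lemma map_fst_zip_rotate {V : Type} (c : List V) : (c.zip (c.rotate 1)).map Prod.fst = c :=
  List.map_fst_zip (by simp)

lemma map_snd_zip_rotate {V : Type} (c : List V) :
    (c.zip (c.rotate 1)).map Prod.snd = c.rotate 1 :=
  List.map_snd_zip (by simp)

lemma exists_arc_from {V : Type} {c : List V} {x : V} (hx : x ∈ c) :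
    ∃ y, (x, y) ∈ c.zip (c.rotate 1) := by
  rw [← map_fst_zip_rotate c] at hx
  simpa using hx

lemma exists_arc_to {V : Type} {c : List V} {y : V} (hy : y ∈ c) :
    ∃ x, (x, y) ∈ c.zip (c.rotate 1) := by
  rw [← List.mem_rotate (n := 1), ← map_snd_zip_rotate c] at hy
  simpa using hy

/-- A cycle on at least two distinct vertices has no loops. -/
lemma ne_of_mem_zip_rotate {V : Type} {c : List V} (h2 : 2 ≤ c.length) (hn : c.Nodup) {x y : V}
    (h : (x, y) ∈ c.zip (c.rotate 1)) : x ≠ y := by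
  rintro rfl
  obtain ⟨i, hi, he⟩ := List.mem_iff_getElem.1 h
  simp only [List.getElem_zip, Prod.mk.injEq, List.getElem_rotate] at he
  have hi' : i < c.length := by simpa using hi
  have heq := (hn.getElem_inj_iff).1 (he.1.trans he.2.symm)
  rcases Nat.lt_or_ge (i + 1) c.length with h | h
  · rw [Nat.mod_eq_of_lt h] at heq
    omega
  · have : i + 1 = c.length := by omega
    rw [this, Nat.mod_self] at heq
    omega

lemma sum_map_ite_eq_countP_nsmul {α M : Type} [AddMonoid M] (p : α → Prop) [DecidablePred p]
    (g : M) (l : List α) :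
    (l.map fun e => if p e then g else 0).sum = l.countP (fun e => decide (p e)) • g := by
  induction l with
  | nil => simp
  | cons a l ih =>
    by_cases h : p a
    · simp [h, ih, succ_nsmul']
    · simp [h, ih]

/-- For a positive integer `q` and a generator `g` of `ℤ_q`, consider
the labelling `γ` of the complete digraph on the ordered vertex set `{0, …, q}` assigning
`g` to increasing arcs and `0` to decreasing arcs. Then there is an arc `e = (a, b)` such
that the digraph `D - e` contains no balanced cycle, i.e. every balanced cycle of `(D, γ)`
traverses the arc `e`. -/
theorem arc_critical_construction (q : ℕ) (hq : 0 < q) (g : ZMod q)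
    (hg : AddSubgroup.zmultiples g = ⊤) :
    ∃ a b : Fin (q + 1), a ≠ b ∧
      ∀ c : List (Fin (q + 1)),
        IsBalancedCycleAdd (fun i j => if i < j then g else 0) c →
        cycleUsesArc c a b := by
  refine ⟨Fin.last q, 0, ?_, ?_⟩
  · simp [Fin.ext_iff, hq.ne']
  rintro c ⟨h2, hn, hs⟩
  unfold cycleUsesArc
  have hord : addOrderOf g = q := by
    rw [← Nat.card_zmultiples, hg, AddSubgroup.card_top, Nat.card_zmod]
  unfold cycleSum at hs
  rw [sum_map_ite_eq_countP_nsmul (fun e : Fin (q + 1) × Fin (q + 1) => e.1 < e.2),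
    ← addOrderOf_dvd_iff_nsmul_eq_zero, hord] at hs
  have hlen : (c.zip (c.rotate 1)).length = c.length := by simp
  have hle : c.length ≤ q + 1 := by simpa using hn.length_le_card
  have hne : c.toFinset.Nonempty := by
    rw [List.toFinset_nonempty_iff]
    rintro rfl
    simp at h2
  set P := c.zip (c.rotate 1) with hP
  have hpos : 0 < P.countP (fun e => decide (e.1 < e.2)) := by
    obtain ⟨m, hm, hmin⟩ := c.toFinset.exists_minimal hne
    obtain ⟨y, hy⟩ := exists_arc_from (List.mem_toFinset.1 hm)
    have hyc : y ∈ c := List.mem_rotate.1 (List.of_mem_zip hy).2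
    have hmy := ne_of_mem_zip_rotate h2 hn hy
    refine List.countP_pos_iff.2 ⟨_, hy, ?_⟩
    rcases lt_or_gt_of_ne hmy with h | h
    · simpa using h
    · exact absurd (hmin (List.mem_toFinset.2 hyc) h.le) (not_le.2 h)
  have hadd := List.length_eq_countP_add_countP (fun e => decide (e.1 < e.2)) (l := P)
  have hpos' : 0 < P.countP (fun e => decide ¬ (decide (e.1 < e.2) = true)) := by
    obtain ⟨m, hm, hmax⟩ := c.toFinset.exists_maximal hne
    obtain ⟨y, hy⟩ := exists_arc_from (List.mem_toFinset.1 hm)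
    have hyc : y ∈ c := List.mem_rotate.1 (List.of_mem_zip hy).2
    refine List.countP_pos_iff.2 ⟨_, hy, ?_⟩
    simp only [decide_eq_true_eq, not_lt]
    by_contra h
    exact h (hmax (List.mem_toFinset.2 hyc) (not_le.1 h).le)
  have hqle := Nat.le_of_dvd hpos hs
  have hone : P.countP (fun e => decide ¬ (decide (e.1 < e.2) = true)) = 1 := by omega
  have hall : ∀ x, x ∈ c := by
    intro x
    have : c.toFinset = Finset.univ := by
      rw [← Finset.card_eq_iff_eq_univ, List.toFinset_card_of_nodup hn, Fintype.card_fin]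
      omega
    rw [← List.mem_toFinset, this]
    exact Finset.mem_univ x
  obtain ⟨y, hy⟩ := exists_arc_from (hall (Fin.last q))
  obtain ⟨x, hx⟩ := exists_arc_to (hall 0)
  rw [List.countP_eq_length_filter, List.length_eq_one_iff] at hone
  obtain ⟨e, he⟩ := hone
  have h1 : (Fin.last q, y) = e := by
    rw [← List.mem_singleton, ← he, List.mem_filter]
    exact ⟨hy, by simpa using Fin.le_last y⟩
  have h3 : (x, (0 : Fin (q + 1))) = e := by
    rw [← List.mem_singleton, ← he, List.mem_filter]
    exact ⟨hx, by simp⟩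
  have h4 := h1.trans h3.symm
  rw [Prod.mk.injEq] at h4
  rw [← h4.2]
  exact hy
end

section
/- For every odd positive integer q, every finite simple graph that contains the complete graph K_{2q+2} as a minor contains a cycle whose length is divisible by q. -/
/-!
The branch sets are paired up as `(A i, B i)` with an edge from `a i ∈ A i` to `b i ∈ B i`, for
`i` in a set of size `q + 1`. For every ordered pair `(i, j)` fix a path `σ i j` from `b i` to
`a j` inside `B i ∪ A j`, and label the arc `i → j` of the complete digraph by
`|σ i j| + 1` modulo `q`. A directed cycle `i → j → ⋯ → i` lifts to a cycle of the graph: follow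
`σ i j`, the edge from `a j` to `b j`, and so on. Its length is the sum of the labels modulo `q`,
so it remains to find a directed cycle with label sum zero (`exists_zero_cycle`).

This holds for every labelling `w` of the complete digraph on `|Γ| + 1` vertices by an abelian
group `Γ` of odd order. Suppose that there is no zero cycle. Then, for every choice of starting
values `f` and every vertex set `X`, some `x ∈ X` has a set `Q(x)` of labels of paths in `X` ending
at `x` (the starting vertex `u` contributing `f u`) with at least `|X|` elements
(`exists_card_le_reach`). Taking `X` to be all vertices but `s`, and `f u = w s u`, this gives
`Q(x) = Γ`, and the arc `x → s` closes some path to a zero cycle.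

The bound on `|Q(x)|` is proved by induction on `|X|`. Assume `|Q(x)| < |X|` for all `x`.

* By induction `X \ {z}` contains a vertex `y` with at least `|X| - 1` labels. Appending the arc
  `y → z` gives `Q(z) = Q(y) + w y z`, and all these sets have size `|X| - 1`. Following
  `z ↦ y` until it becomes periodic gives a directed cycle whose nonzero label sum stabilizes some
  `Q`, hence every `Q(z)` has a nontrivial stabilizer (`exists_stab`).
* Given `z, z'`, a vertex `y` reaching at least `|X| - 2` labels in `X \ {z, z'}` shows that
  `Q(z)` and a translate of `Q(z')` agree up to one element each. As the order of `Γ` is odd, they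
  are equal (`eq_of_stab`), so all `Q(z)` have the same stabilizer `H`.
* Given `u ≠ v`, paths starting at `v` and continuing in `X \ {u, v}`, with or without the arc
  `u → v` in front, show that `f u + w u v - f v` stabilizes some `Q(x)`
  (`mem_stab_of_almost`), so it lies in `H`.
* Hence, up to the potential `f`, all labels lie in `H`, while paths from a vertex `z` to a
  suitable `x` have at least `|X| - 1 = |Q(z)| ≥ |H|` labels. They exhaust a coset of `H`, and one
  of them is closed by the arc `x → z` to a zero cycle, a contradiction.
-/

/-! ### Zero-sum cycles in labelled complete digraphs -/

/-- The label of a path in a complete digraph with arc labels `w`, where in addition the starting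
vertex `u` contributes `f u`. Paths are listed backwards: the head of the list is the final vertex
of the path. -/
def pathVal {ι Γ : Type*} [AddCommGroup Γ] (w : ι → ι → Γ) (f : ι → Γ) : List ι → Γ
  | [] => 0
  | [a] => f a
  | b :: a :: l => pathVal w f (a :: l) + w a b

/-- The set of labels of paths that end at `x` and use only vertices of `S`, the starting vertex
`u` contributing `f u`. -/
def Reach {ι Γ : Type*} [AddCommGroup Γ] (w : ι → ι → Γ) (f : ι → Γ) (S : Set ι) (x : ι) : Set Γ :=
  {g | ∃ l, (x :: l).Nodup ∧ (∀ v ∈ x :: l, v ∈ S) ∧ pathVal w f (x :: l) = g}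

/-- No directed cycle (of length at least two) has label sum zero. A cycle is given by a path
ending at `a`, and the closing arc leaves `a`, so it is accounted for by the starting values
`w a`. -/
def NoZeroCycle {ι Γ : Type*} [AddCommGroup Γ] (w : ι → ι → Γ) : Prop :=
  ∀ a x l, (a :: x :: l).Nodup → pathVal w (w a) (a :: x :: l) ≠ 0

/-- The stabilizer of a subset of an abelian group under translation. -/
def setStab {Γ : Type*} [AddCommGroup Γ] (E : Set Γ) : AddSubgroup Γ where
  carrier := {g | ∀ e, e + g ∈ E ↔ e ∈ E}
  zero_mem' := by simp
  add_mem' := by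
    intro a b ha hb e
    rw [← add_assoc, hb, ha]
  neg_mem' := by
    intro a ha e
    rw [← ha (e + -a)]
    simp

section Labels

variable {ι Γ : Type*} [AddCommGroup Γ] {w : ι → ι → Γ} {f : ι → Γ} {S U : Set ι}

theorem mem_setStab {E : Set Γ} {g : Γ} : g ∈ setStab E ↔ ∀ e, e + g ∈ E ↔ e ∈ E := Iff.rfl

theorem setStab_eq_of_translate {E F : Set Γ} {c : Γ} (h : ∀ e, e + c ∈ E ↔ e ∈ F) :
    setStab E = setStab F := by
  ext g
  simp only [mem_setStab]
  constructor
  · intro hg e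
    rw [← h, ← h, add_right_comm, hg]
  · intro hg e
    have h1 := h (e - c + g)
    have h2 := h (e - c)
    rw [show e - c + g + c = e + g by abel] at h1
    rw [sub_add_cancel] at h2
    rw [h1, h2, hg]

theorem reach_single {x : ι} (hx : x ∈ S) : f x ∈ Reach w f S x :=
  ⟨[], by simp, by simpa using hx, rfl⟩

theorem reach_mono_s3 (h : S ⊆ U) {x : ι} : Reach w f S x ⊆ Reach w f U x := by
  rintro g ⟨l, h1, h2, h3⟩
  exact ⟨l, h1, fun v hv => h (h2 v hv), h3⟩

theorem reach_cons {y z : ι} {g : Γ} (hg : g ∈ Reach w f S y) (hz : z ∉ S) :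
    g + w y z ∈ Reach w f (insert z S) z := by
  obtain ⟨l, h1, h2, h3⟩ := hg
  refine ⟨y :: l, List.nodup_cons.2 ⟨fun h => hz (h2 _ h), h1⟩, ?_, by simp [pathVal, h3]⟩
  intro v hv
  rcases List.mem_cons.1 hv with rfl | hv
  · simp
  · exact Or.inr (h2 v hv)

theorem pathVal_append (v : ι) (l₁ : List ι) (x : ι) (l₂ : List ι) :
    pathVal w f ((x :: l₂) ++ (v :: l₁)) =
      pathVal w f (v :: l₁) + pathVal w (w v) (x :: l₂) := by
  induction l₂ generalizing x with
  | nil => simp [pathVal]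
  | cons y l₂ ih =>
    have := ih y
    simp only [List.cons_append] at this
    simp only [List.cons_append, pathVal, this, add_assoc]

/-- Concatenation of paths: a path to `v` followed by a path in a disjoint vertex set, whose
starting values are the labels of the arcs leaving `v`. -/
theorem reach_trans {v x : ι} {g g' : Γ} (hg : g ∈ Reach w f S v)
    (hg' : g' ∈ Reach w (w v) U x) (hd : Disjoint S U) : g + g' ∈ Reach w f (S ∪ U) x := by
  obtain ⟨l₁, h1, h2, rfl⟩ := hg
  obtain ⟨l₂, h1', h2', rfl⟩ := hg'
  refine ⟨l₂ ++ v :: l₁, ?_, ?_, ?_⟩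
  · rw [← List.cons_append, List.nodup_append]
    refine ⟨h1', h1, ?_⟩
    rintro a ha b hb rfl
    exact Set.disjoint_left.1 hd (h2 _ hb) (h2' _ ha)
  · intro u hu
    rw [← List.cons_append, List.mem_append] at hu
    exact hu.elim (fun h => Or.inr (h2' u h)) (fun h => Or.inl (h2 u h))
  · rw [← List.cons_append, pathVal_append]

theorem reach_close (hw : NoZeroCycle w) {a x : ι} (ha : a ∉ S)
    : -w x a ∉ Reach w (w a) S x := by
  rintro ⟨l, h1, h2, h3⟩
  refine hw a x l (List.nodup_cons.2 ⟨fun h => ha (h2 _ h), h1⟩) ?_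
  simp [pathVal, h3]

/-- If `f` is a potential for `w` modulo the subgroup `H`, then all labels of paths to `x` are
congruent to `f x` modulo `H`. -/
theorem reach_coset (H : AddSubgroup Γ)
    (h : ∀ u ∈ S, ∀ v ∈ S, u ≠ v → f u + w u v - f v ∈ H) {x : ι} {g : Γ}
    (hg : g ∈ Reach w f S x) : g - f x ∈ H := by
  obtain ⟨l, h1, h2, rfl⟩ := hg
  induction l generalizing x with
  | nil => simp [pathVal]
  | cons y l ih =>
    rw [List.nodup_cons] at h1
    have h3 := ih h1.2 (fun v hv => h2 v (List.mem_cons_of_mem _ hv))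
    have h4 := h y (h2 y (by simp)) x (h2 x (by simp)) (by rintro rfl; simp at h1)
    have := H.add_mem h3 h4
    convert this using 1
    simp only [pathVal]
    abel

/-- Two equicardinal sets that both extend `B` by at most one element and both have a nontrivial
stabilizer are equal, provided the group has no elements of order two. -/
theorem eq_of_stab [Finite Γ] (hodd : ∀ g : Γ, g + g = 0 → g = 0) {B E₁ E₂ : Set Γ}
    (h1 : B ⊆ E₁) (h2 : B ⊆ E₂) (hc : E₁.ncard ≤ B.ncard + 1) (hc' : E₁.ncard = E₂.ncard)
    {g₁ g₂ : Γ} (hg₁ : g₁ ∈ setStab E₁) (hg₂ : g₂ ∈ setStab E₂) (hn₁ : g₁ ≠ 0) (hn₂ : g₂ ≠ 0) :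
    E₁ = E₂ := by
  by_contra hne
  have key : ∀ {E F : Set Γ}, E.ncard = F.ncard → E ≠ F → ∃ p ∈ E, p ∉ F := by
    intro E F hEF hn
    by_contra! hcon
    exact hn (Set.eq_of_subset_of_ncard_le hcon hEF.ge)
  have key2 : ∀ {E : Set Γ} {p : Γ}, B ⊆ E → E.ncard ≤ B.ncard + 1 → p ∈ E → p ∉ B →
      ∀ e ∈ E, e ≠ p → e ∈ B := by
    intro E p hB hE hp hpB e he hep
    have : insert p B = E := by
      apply Set.eq_of_subset_of_ncard_le (ht := Set.toFinite _) (Set.insert_subset hp hB)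
      rwa [Set.ncard_insert_of_notMem hpB]
    rw [← this] at he
    exact he.resolve_left hep
  obtain ⟨p, hp, hp2⟩ := key hc' hne
  obtain ⟨p', hp', hp1'⟩ := key hc'.symm (Ne.symm hne)
  have k1 := key2 h1 hc hp (fun h => hp2 (h2 h))
  have k2 := key2 h2 (hc' ▸ hc) hp' (fun h => hp1' (h1 h))
  -- The set `E₁` is `B ∪ {p}` and `E₂` is `B ∪ {p'}`. The choices `g = g₁` and `g = -g₁` below
  -- clash unless `g₁` has order two.
  have main : ∀ g ∈ setStab E₁, g ≠ 0 → p + g + g₂ = p' := by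
    intro g hg hn
    by_contra hcon
    have a1 : p + g ∈ B := k1 _ ((hg p).2 hp) (by simpa using hn)
    have a2 : p + g + g₂ ∈ B := k2 _ ((hg₂ _).2 (h2 a1)) hcon
    have a3 : p + g₂ ∈ E₁ := by
      rw [← hg, add_right_comm]
      exact h1 a2
    have a4 : p + g₂ ∈ B := k1 _ a3 (by simpa using hn₂)
    exact hp2 ((hg₂ p).1 (h2 a4))
  have e1 := main g₁ hg₁ hn₁
  have e2 := main (-g₁) (neg_mem hg₁) (neg_ne_zero.2 hn₁)
  apply hn₁
  apply hodd
  have : p + g₁ + g₂ - (p + -g₁ + g₂) = 0 := by rw [e1, e2, sub_self]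
  rw [← this]
  abel

/-- If `E` has a nontrivial stabilizer and `B` is `E` minus at most one element, then any `d` with
`B + d ⊆ E` stabilizes `E`. -/
theorem mem_stab_of_almost [Finite Γ] {B E : Set Γ} (h1 : B ⊆ E) (hc : E.ncard ≤ B.ncard + 1)
    {g d : Γ} (hg : g ∈ setStab E) (hn : g ≠ 0) (hd : ∀ b ∈ B, b + d ∈ E) : d ∈ setStab E := by
  have k : ∀ e ∈ E, e + d ∈ E := by
    intro e he
    by_cases heB : e ∈ B
    · exact hd e heB
    · have hE : insert e B = E := by
        apply Set.eq_of_subset_of_ncard_le (ht := Set.toFinite _) (Set.insert_subset he h1)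
        rwa [Set.ncard_insert_of_notMem heB]
      have h2 : e + g ∈ insert e B := by
        rw [hE]
        exact (hg e).2 he
      have h3 : e + g ∈ B := h2.resolve_left (by simpa using hn)
      have := hd _ h3
      rw [add_right_comm] at this
      exact (hg _).1 this
  have him : (fun e => e + d) '' E = E := by
    apply Set.eq_of_subset_of_ncard_le (ht := Set.toFinite _)
    · rintro _ ⟨e, he, rfl⟩
      exact k e he
    · rw [Set.ncard_image_of_injective _ (add_left_injective d)]
  intro e
  refine ⟨fun h => ?_, k e⟩
  rw [← him] at h
  obtain ⟨e', he', heq⟩ := h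
  rwa [← add_right_cancel heq]

/-- A map `Y` along which a family of sets `R` is shifted by the arc labels produces, on its
periodic points, the label sum of a directed cycle as a nonzero element of the stabilizer. All
sets along an orbit have the same stabilizer, so every vertex inherits it. -/
theorem exists_stab [Finite ι] (hw : NoZeroCycle w) {X : Set ι} {Y : ι → ι} {R : ι → Set Γ}
    (hYX : ∀ z ∈ X, Y z ∈ X) (hYne : ∀ z ∈ X, Y z ≠ z)
    (hR : ∀ z ∈ X, ∀ e, e + w (Y z) z ∈ R z ↔ e ∈ R (Y z)) {z : ι} (hz : z ∈ X) :
    ∃ g ∈ setStab (R z), g ≠ 0 := by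
  have hX : ∀ i, ∀ c ∈ X, Y^[i] c ∈ X := by
    intro i
    induction i with
    | zero => exact fun c hc => hc
    | succ i ih => exact fun c hc => ih _ (hYX c hc)
  have hst : ∀ i, ∀ c ∈ X, setStab (R c) = setStab (R (Y^[i] c)) := by
    intro i
    induction i with
    | zero => exact fun c hc => rfl
    | succ i ih =>
      exact fun c hc => (setStab_eq_of_translate (hR c hc)).trans (ih _ (hYX c hc))
  have hval : ∀ (f' : ι → Γ) k, ∀ c ∈ X, f' (Y^[k] c) = w (Y^[k + 1] c) (Y^[k] c) →
      ∀ e, e + pathVal w f' (List.iterate Y c (k + 1)) ∈ R c ↔ e ∈ R (Y^[k + 1] c) := by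
    intro f' k
    induction k with
    | zero =>
      intro c hc hf e
      simp only [List.iterate, pathVal]
      simp only [Function.iterate_zero, id, Function.iterate_one, zero_add] at hf ⊢
      rw [hf, hR c hc]
    | succ k ih =>
      intro c hc hf e
      have h1 := ih (Y c) (hYX c hc) hf e
      simp only [List.iterate, pathVal] at h1 ⊢
      rw [← add_assoc, hR c hc, h1]
      rfl
  obtain ⟨i, j, hij, hcol⟩ := Finite.exists_ne_map_eq_of_infinite (fun n : ℕ => Y^[n] z)
  wlog hlt : i < j generalizing i j
  · exact this j i hij.symm hcol.symm (by omega)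
  rw [hst i z hz]
  set c := Y^[i] z with hc
  have hcX : c ∈ X := hX i z hz
  have hper : Function.IsPeriodicPt Y (j - i) c := by
    have : Y^[j - i] (Y^[i] z) = Y^[j] z := by
      rw [← Function.iterate_add_apply, Nat.sub_add_cancel hlt.le]
    exact this.trans hcol.symm
  have hpos := hper.minimalPeriod_pos (by omega)
  have hmp : Y^[Function.minimalPeriod Y c] c = c := Function.iterate_minimalPeriod
  have hnd : (List.iterate Y c (Function.minimalPeriod Y c)).Nodup := by
    rw [← List.range_map_iterate]
    refine List.Nodup.map_on ?_ List.nodup_range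
    intro a ha b hb hab
    rw [List.mem_range] at ha hb
    exact Function.iterate_injOn_Iio_minimalPeriod ha hb hab
  obtain ⟨r, hr⟩ : ∃ r, r = Function.minimalPeriod Y c := ⟨_, rfl⟩
  rw [← hr] at hpos hmp hnd
  match r, hpos with
  | 1, _ => exact absurd hmp (hYne c hcX)
  | n + 2, _ =>
    refine ⟨pathVal w (w c) (List.iterate Y c (n + 2)), ?_, hw _ _ _ hnd⟩
    intro e
    rw [hval (w c) (n + 1) c hcX (by rw [hmp]), hmp]

/-- If no directed cycle has label zero in a group without elements of order two, then in every
finite nonempty vertex set `X` some vertex is the end of paths with at least `|X|` distinct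
labels, for every choice of starting values. -/
theorem exists_card_le_reach [Finite ι] [Finite Γ] (hodd : ∀ g : Γ, g + g = 0 → g = 0)
    (hw : NoZeroCycle w) (X : Finset ι) (hne : X.Nonempty) (f : ι → Γ) :
    ∃ x ∈ X, X.card ≤ (Reach w f X x).ncard := by
  classical
  induction hm : X.card using Nat.strong_induction_on generalizing X f with
  | _ m IH =>
  subst hm
  by_contra! hlt
  have IH' : ∀ (Z : Finset ι) (f' : ι → Γ), Z ⊂ X → Z.Nonempty →
      ∃ x ∈ Z, Z.card ≤ (Reach w f' Z x).ncard := fun Z f' hZ hZn =>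
    IH Z.card (Finset.card_lt_card hZ) Z hZn f' rfl
  have hinj : ∀ (c : Γ) (E : Set Γ), ((fun e => e + c) '' E).ncard = E.ncard := fun c E =>
    Set.ncard_image_of_injective _ (add_left_injective c)
  have hshift : ∀ (Z : Finset ι) (y z : ι), Z ⊆ X → z ∈ X → z ∉ Z →
      (fun e => e + w y z) '' Reach w f Z y ⊆ Reach w f X z := by
    rintro Z y z hZ hz hzZ _ ⟨e, he, rfl⟩
    refine reach_mono_s3 ?_ (reach_cons he (by simpa using hzZ))
    exact Set.insert_subset (by simpa using hz) (by simpa using hZ)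
  have hcard2 : 2 ≤ X.card := by
    by_contra hcon
    obtain ⟨a, ha⟩ := hne
    have := hlt a ha
    have h0 : 0 < (Reach w f X a).ncard :=
      (Set.ncard_pos).2 ⟨_, reach_single (by simpa using ha)⟩
    omega
  have step1 : ∀ z, ∃ y, z ∈ X → y ∈ X ∧ y ≠ z ∧ (Reach w f X z).ncard + 1 = X.card ∧
      ∀ e, e + w y z ∈ Reach w f X z ↔ e ∈ Reach w f X y := by
    intro z
    by_cases hz : z ∈ X
    swap
    · exact ⟨z, fun h => absurd h hz⟩
    have hce := Finset.card_erase_of_mem hz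
    obtain ⟨y, hy, hyc⟩ := IH' (X.erase z) f (Finset.erase_ssubset hz)
      (Finset.card_pos.1 (by omega))
    have hyX := Finset.mem_of_mem_erase hy
    have h1 : Reach w f (X.erase z : Finset ι) y = Reach w f X y := by
      apply Set.eq_of_subset_of_ncard_le (ht := Set.toFinite _)
      · exact reach_mono_s3 (by exact_mod_cast Finset.erase_subset _ _)
      · have := hlt y hyX
        omega
    have h2 := hshift (X.erase z) y z (Finset.erase_subset _ _) hz (by simp)
    rw [h1] at h2 hyc
    have hz' := hlt z hz
    have h3 := Set.eq_of_subset_of_ncard_le h2 (by rw [hinj]; omega)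
    refine ⟨y, fun _ => ⟨hyX, Finset.ne_of_mem_erase hy, ?_, ?_⟩⟩
    · rw [← h3, hinj] at hz' ⊢
      omega
    · intro e
      rw [← h3]
      simp
  choose Y hY using step1
  have hstab : ∀ z ∈ X, ∃ g ∈ setStab (Reach w f X z), g ≠ 0 := fun z hz =>
    exists_stab (X := (X : Set ι)) (R := fun z => Reach w f X z) hw
      (fun z hz => (hY z hz).1) (fun z hz => (hY z hz).2.1)
      (fun z hz => (hY z hz).2.2.2) hz
  have hcard : ∀ z ∈ X, (Reach w f X z).ncard + 1 = X.card := fun z hz => (hY z hz).2.2.1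
  have hcard3 : 3 ≤ X.card := by
    obtain ⟨a, ha⟩ := hne
    obtain ⟨g, hg, hg0⟩ := hstab a ha
    have h1 : f a ∈ Reach w f X a := reach_single (by simpa using ha)
    have h2 := (Set.one_lt_ncard).2 ⟨_, h1, _, (hg _).2 h1, by simpa using hg0⟩
    have := hcard a ha
    omega
  have herase : ∀ u ∈ X, ∀ v ∈ X, u ≠ v → ((X.erase u).erase v).card + 2 = X.card ∧
      (X.erase u).erase v ⊂ X ∧ ((X.erase u).erase v).Nonempty := by
    intro u hu v hv huv
    have h1 := Finset.card_erase_of_mem hu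
    have h2 := Finset.card_erase_of_mem (Finset.mem_erase.2 ⟨huv.symm, hv⟩)
    refine ⟨by omega, ?_, Finset.card_pos.1 (by omega)⟩
    exact (Finset.erase_subset _ _).trans_ssubset (Finset.erase_ssubset hu)
  -- Any two vertices share a vertex `y` that reaches almost all labels while avoiding both.
  have hsame : ∀ z ∈ X, ∀ z' ∈ X, setStab (Reach w f X z) = setStab (Reach w f X z') := by
    intro z hz z' hz'
    by_cases hzz : z = z'
    · rw [hzz]
    obtain ⟨hc, hss, hnem⟩ := herase z hz z' hz' hzz
    obtain ⟨y, hy, hyc⟩ := IH' _ f hss hnem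
    set B := Reach w f ((X.erase z).erase z' : Finset ι) y with hB
    have h1 := hshift _ y z hss.subset hz (by simp)
    have h2 := hshift _ y z' hss.subset hz' (by simp)
    rw [← hB] at h1 h2
    have htr : ∀ e, e + (w y z' - w y z) ∈ Reach w f X z' ↔
        e ∈ (fun e => e + (w y z - w y z')) '' Reach w f X z' := by
      intro e
      constructor
      · exact fun h => ⟨_, h, by simp only; abel⟩
      · rintro ⟨e', he', rfl⟩
        have h3 : e' + (w y z - w y z') + (w y z' - w y z) = e' := by abel
        simp only [h3, he']
    have hst' := setStab_eq_of_translate htr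
    obtain ⟨g, hg, hg0⟩ := hstab z hz
    obtain ⟨g', hg', hg0'⟩ := hstab z' hz'
    rw [hst'] at hg' ⊢
    rw [← eq_of_stab hodd h1 (B := (fun e => e + w y z) '' B) ?_ ?_ ?_ hg hg' hg0 hg0']
    · rintro _ ⟨e, he, rfl⟩
      exact ⟨e + w y z', h2 ⟨e, he, rfl⟩, by simp⟩
    · rw [hinj]
      have := hcard z hz
      omega
    · rw [hinj]
      have := hcard z hz
      have := hcard z' hz'
      omega
  have hpot : ∀ z ∈ X, ∀ u ∈ X, ∀ v ∈ X, u ≠ v →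
      f u + w u v - f v ∈ setStab (Reach w f X z) := by
    intro z hz u hu v hv huv
    obtain ⟨hc, hss, hnem⟩ := herase u hu v hv huv
    obtain ⟨x, hx, hxc⟩ := IH' _ (w v) hss hnem
    have hxX := hss.subset hx
    rw [hsame z hz x hxX]
    obtain ⟨g, hg, hg0⟩ := hstab x hxX
    set B := Reach w (w v) ((X.erase u).erase v : Finset ι) x with hB
    refine mem_stab_of_almost (B := (fun e => e + f v) '' B) ?_ ?_ hg hg0 ?_
    · rintro _ ⟨e, he, rfl⟩
      have := reach_trans (S := {v}) (f := f) (reach_single rfl) he (by simp)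
      rw [add_comm] at this
      refine reach_mono_s3 ?_ this
      exact Set.union_subset (by simpa using hv) (by exact_mod_cast hss.subset)
    · rw [hinj]
      have := hcard x hxX
      omega
    · rintro _ ⟨e, he, rfl⟩
      have h1 : f u + w u v ∈ Reach w f {v, u} v :=
        reach_cons (S := {u}) (reach_single rfl) (by simpa using huv.symm)
      have := reach_trans h1 he (by
        rw [Set.disjoint_left]
        rintro a (rfl | rfl) <;> simp)
      rw [show e + f v + (f u + w u v - f v) = f u + w u v + e by abel]
      refine reach_mono_s3 ?_ this
      refine Set.union_subset ?_ (by exact_mod_cast hss.subset)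
      rintro a (rfl | rfl) <;> simpa
  -- Now all labels lie in one subgroup, up to a change of potential, and `X` is large
  -- compared with it, which forces a zero cycle through any vertex `z`.
  obtain ⟨z, hz⟩ := hne
  have hpz := hpot z hz
  set H := setStab (Reach w f X z) with hH
  have hce := Finset.card_erase_of_mem hz
  obtain ⟨x, hx, hxc⟩ := IH' (X.erase z) (w z) (Finset.erase_ssubset hz)
    (Finset.card_pos.1 (by omega))
  have hxX := Finset.mem_of_mem_erase hx
  have hxz := Finset.ne_of_mem_erase hx
  have hfz : f z ∈ Reach w f X z := reach_single (by simpa using hz)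
  have hmem : ∀ h ∈ H, f z + h ∈ Reach w f X z := fun h hh => (hh _).2 hfz
  have himg : (fun e => e + (f z - w z x)) '' Reach w (w z) (X.erase z : Finset ι) x =
      Reach w f X z := by
    apply Set.eq_of_subset_of_ncard_le (ht := Set.toFinite _)
    · rintro _ ⟨e, he, rfl⟩
      have := reach_coset H (f := w z) ?_ he
      · have := hmem _ this
        convert this using 1
        simp only
        abel
      · intro u hu v hv huv
        simp only [Finset.coe_erase, Set.mem_sdiff, Finset.mem_coe, Set.mem_singleton_iff] at hu hv
        have := H.sub_mem (H.add_mem (hpz z hz u hu.1 (Ne.symm hu.2)) (hpz u hu.1 v hv.1 huv))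
          (hpz z hz v hv.1 (Ne.symm hv.2))
        convert this using 1
        abel
    · rw [hinj]
      have := hcard z hz
      omega
  have htarget := hmem _ (H.neg_mem (H.add_mem (hpz x hxX z hz hxz) (hpz z hz x hxX hxz.symm)))
  rw [← himg] at htarget
  obtain ⟨e, he, hee⟩ := htarget
  have : e = -w x z := by
    have h5 : e = (e + (f z - w z x)) - (f z - w z x) := by abel
    simp only at hee
    rw [h5, hee]
    abel
  rw [this] at he
  exact reach_close hw (by simp) he

/-- A complete digraph on `|Γ| + 1` vertices with arcs labelled in an abelian group `Γ` of odd
order has a directed cycle with label sum zero. -/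
theorem exists_zero_cycle [Fintype ι] [Finite Γ] (hodd : ∀ g : Γ, g + g = 0 → g = 0)
    (hcard : Fintype.card ι = Nat.card Γ + 1) (w : ι → ι → Γ) : ¬ NoZeroCycle w := by
  classical
  intro hw
  have hΓ : 0 < Nat.card Γ := Nat.card_pos
  obtain ⟨s⟩ : Nonempty ι := Fintype.card_pos_iff.1 (by omega)
  have hc : (Finset.univ.erase s).card = Nat.card Γ := by
    rw [Finset.card_erase_of_mem (Finset.mem_univ s), Finset.card_univ, hcard]
    rfl
  obtain ⟨x, hx, hxc⟩ := exists_card_le_reach hodd hw (Finset.univ.erase s)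
    (Finset.card_pos.1 (by omega)) (w s)
  have huniv : Reach w (w s) (Finset.univ.erase s : Finset ι) x = Set.univ := by
    apply Set.eq_of_subset_of_ncard_le (Set.subset_univ _)
    rw [Set.ncard_univ]
    omega
  exact reach_close hw (S := (Finset.univ.erase s : Finset ι)) (by simp) (huniv ▸ Set.mem_univ _)

end Labels

/-! ### Lifting directed cycles to a graph with a clique minor -/

section Minor

open SimpleGraph

variable {V : Type*} {G : SimpleGraph V}

theorem exists_walk_of_connected {S : Set V} (hS : (G.induce S).Connected) {u v : V} (hu : u ∈ S)
    (hv : v ∈ S) : ∃ p : G.Walk u v, ∀ x ∈ p.support, x ∈ S := by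
  obtain ⟨p⟩ := hS.preconnected ⟨u, hu⟩ ⟨v, hv⟩
  refine ⟨p.map (Embedding.induce S).toHom, ?_⟩
  intro x hx
  obtain ⟨y, -, rfl⟩ := List.mem_map.1 ((Walk.support_map (Embedding.induce S).toHom p) ▸ hx)
  exact y.2

theorem exists_path_of_connected {S T : Set V} (hS : (G.induce S).Connected)
    (hT : (G.induce T).Connected) {x y u v : V} (hx : x ∈ S) (hy : y ∈ T) (h : G.Adj x y)
    (hu : u ∈ S) (hv : v ∈ T) :
    ∃ p : G.Walk u v, p.IsPath ∧ ∀ z ∈ p.support, z ∈ S ∪ T := by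
  classical
  obtain ⟨p, hp⟩ := exists_walk_of_connected hS hu hx
  obtain ⟨r, hr⟩ := exists_walk_of_connected hT hy hv
  refine ⟨(p.append (.cons h r)).bypass, Walk.bypass_isPath _, ?_⟩
  intro z hz
  have := Walk.support_bypass_subset_support _ hz
  rw [Walk.support_append, List.mem_append, Walk.support_cons, List.tail_cons] at this
  exact this.imp (hp z) (hr z)

theorem isPath_join {a b c d : V} {p : G.Walk a b} {r : G.Walk c d} (hp : p.IsPath)
    (hr : r.IsPath) (h : G.Adj b c) (hd : ∀ x ∈ p.support, x ∉ r.support) :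
    (p.append (.cons h r)).IsPath := by
  apply Walk.IsPath.mk'
  rw [Walk.support_append, Walk.support_cons, List.tail_cons, List.nodup_append]
  refine ⟨hp.support_nodup, hr.support_nodup, ?_⟩
  rintro x hx y hy rfl
  exact hd x hx hy

variable {ι : Type*} {A B : ι → Set V} {a b : ι → V} {q : ℕ}

/-- A path in the complete digraph on `ι` that starts at an out-neighbour of `s` and ends at `x`
lifts to a path of `G` from `b s` to `a x`. Each arc `i → j` is traversed along `σ i j`, and each
intermediate vertex `j` along the edge from `a j` to `b j`. -/
theorem exists_lift (hAB : ∀ i j, Disjoint (A i) (B j))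
    (hA : ∀ i j, i ≠ j → Disjoint (A i) (A j)) (hB : ∀ i j, i ≠ j → Disjoint (B i) (B j))
    (hab : ∀ i, G.Adj (a i) (b i)) (σ : ∀ i j, G.Walk (b i) (a j)) (hσ : ∀ i j, (σ i j).IsPath)
    (hσs : ∀ i j, ∀ z ∈ (σ i j).support, z ∈ B i ∪ A j) (s x : ι) (l : List ι)
    (hnd : (s :: x :: l).Nodup) :
    ∃ p : G.Walk (b s) (a x), p.IsPath ∧
      (∀ z ∈ p.support, z ∈ B s ∨ z ∈ A x ∨ ∃ j ∈ l, z ∈ A j ∪ B j) ∧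
      ((p.length + 1 : ℕ) : ZMod q) =
        pathVal (fun i j => (((σ i j).length + 1 : ℕ) : ZMod q))
          (fun j => (((σ s j).length + 1 : ℕ) : ZMod q)) (x :: l) := by
  induction l generalizing x with
  | nil =>
    exact ⟨σ s x, hσ s x, fun z hz => (hσs s x z hz).imp id Or.inl, rfl⟩
  | cons y l ih =>
    simp only [List.nodup_cons, List.mem_cons, not_or] at hnd
    obtain ⟨⟨hsx, hsy, hsl⟩, ⟨hxy, hxl⟩, hyl, hl⟩ := hnd
    obtain ⟨p, hp, hps, hlen⟩ := ih y (by simp [hsy, hsl, hyl, hl])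
    refine ⟨p.append (.cons (hab y) (σ y x)), isPath_join hp (hσ y x) _ ?_, ?_, ?_⟩
    · intro z hz hz'
      have dAB : ∀ i j, z ∈ A i → z ∉ B j := fun i j h =>
        Set.disjoint_left.1 (hAB i j) h
      have dA : ∀ i j, z ∈ A i → z ∈ A j → i = j := fun i j h h' => by
        by_contra hne
        exact Set.disjoint_left.1 (hA i j hne) h h'
      have dB : ∀ i j, z ∈ B i → z ∈ B j → i = j := fun i j h h' => by
        by_contra hne
        exact Set.disjoint_left.1 (hB i j hne) h h'
      rcases hσs y x z hz' with h | h <;> rcases hps z hz with h' | h' | ⟨j, hj, h' | h'⟩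
      · exact hsy (dB _ _ h' h)
      · exact dAB _ _ h' h
      · exact dAB _ _ h' h
      · exact hyl (dB _ _ h h' ▸ hj)
      · exact dAB _ _ h h'
      · exact hxy (dA _ _ h h')
      · exact hxl (dA _ _ h h' ▸ hj)
      · exact dAB _ _ h h'
    · intro z hz
      rw [Walk.support_append, List.mem_append, Walk.support_cons, List.tail_cons] at hz
      rcases hz with hz | hz
      · rcases hps z hz with h | h | ⟨j, hj, h⟩
        · exact Or.inl h
        · exact Or.inr (Or.inr ⟨y, by simp, Or.inl h⟩)
        · exact Or.inr (Or.inr ⟨j, by simp [hj], h⟩)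
      · rcases hσs y x z hz with h | h
        · exact Or.inr (Or.inr ⟨y, by simp, Or.inr h⟩)
        · exact Or.inr (Or.inl h)
    · rw [pathVal, ← hlen, Walk.length_append, Walk.length_cons]
      push_cast
      ring

end Minor

/-- For every odd positive integer `q`, every finite simple graph
containing `K_{2q+2}` as a minor (witnessed by `2q+2` pairwise disjoint nonempty
connected branch sets with an edge between every two of them) contains a cycle
whose length is divisible by `q`. -/
theorem cycle_div_q_of_clique_minor (q : ℕ) (hq0 : 0 < q) (hq : Odd q)
    {V : Type} [Fintype V] (G : SimpleGraph V)
    (B : Fin (2 * q + 2) → Set V)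
    (hne : ∀ i, (B i).Nonempty)
    (hdisj : ∀ i j, i ≠ j → Disjoint (B i) (B j))
    (hconn : ∀ i, (G.induce (B i)).Connected)
    (hadj : ∀ i j, i ≠ j → ∃ a ∈ B i, ∃ b ∈ B j, G.Adj a b) :
    ∃ (v : V) (w : G.Walk v v), w.IsCycle ∧ q ∣ w.length := by
  have : NeZero q := ⟨hq0.ne'⟩
  let e : Fin (q + 1) → Fin (2 * q + 2) := fun i => ⟨2 * i, by omega⟩
  let o : Fin (q + 1) → Fin (2 * q + 2) := fun i => ⟨2 * i + 1, by omega⟩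
  have heo : ∀ i j, e i ≠ o j := fun i j h => by
    have := congrArg Fin.val h
    simp only [e, o] at this
    omega
  have hee : ∀ i j, i ≠ j → e i ≠ e j := fun i j hij h => by
    have := congrArg Fin.val h
    simp only [e] at this
    omega
  have hoo : ∀ i j, i ≠ j → o i ≠ o j := fun i j hij h => by
    have := congrArg Fin.val h
    simp only [o] at this
    omega
  have hAB : ∀ i j, Disjoint (B (e i)) (B (o j)) := fun i j => hdisj _ _ (heo i j)
  choose a ha b hb hab using fun i => hadj (e i) (o i) (heo i i)
  have hpath : ∀ i j, ∃ p : G.Walk (b i) (a j), p.IsPath ∧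
      ∀ z ∈ p.support, z ∈ B (o i) ∪ B (e j) := by
    intro i j
    obtain ⟨x, hx, y, hy, hxy⟩ := hadj (o i) (e j) (heo j i).symm
    exact exists_path_of_connected (hconn _) (hconn _) hx hy hxy (hb i) (ha j)
  choose σ hσ hσs using hpath
  have hzero := exists_zero_cycle (Γ := ZMod q) (ι := Fin (q + 1)) (fun g hg => ?_) (by simp)
    (fun i j => (((σ i j).length + 1 : ℕ) : ZMod q))
  swap
  · have h2 : IsUnit ((2 : ℕ) : ZMod q) :=
      (ZMod.isUnit_iff_coprime 2 q).2 hq.coprime_two_left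
    apply h2.mul_left_cancel
    rw [mul_zero, ← hg]
    push_cast
    ring
  simp only [NoZeroCycle, not_forall, not_not] at hzero
  obtain ⟨s, x, l, hnd, hval⟩ := hzero
  obtain ⟨p, hp, hps, hlen⟩ := exists_lift (q := q) (A := fun i => B (e i)) (B := fun i => B (o i))
    hAB (fun i j hij => hdisj _ _ (hee i j hij)) (fun i j hij => hdisj _ _ (hoo i j hij))
    hab σ hσ hσs s x l hnd
  rw [pathVal, ← hlen] at hval
  have hnd' := hnd
  simp only [List.nodup_cons, List.mem_cons, not_or] at hnd'
  obtain ⟨⟨hsx, hsl⟩, hxl, hl⟩ := hnd'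
  have hr : (p.append (.cons (hab x) (σ x s))).IsPath := by
    refine isPath_join hp (hσ x s) _ ?_
    intro z hz hz'
    have dAB : ∀ i j, z ∈ B (e i) → z ∉ B (o j) := fun i j h =>
        Set.disjoint_left.1 (hAB i j) h
    have dA : ∀ i j, z ∈ B (e i) → z ∈ B (e j) → i = j := fun i j h h' => by
      by_contra hne
      exact Set.disjoint_left.1 (hdisj _ _ (hee i j hne)) h h'
    have dB : ∀ i j, z ∈ B (o i) → z ∈ B (o j) → i = j := fun i j h h' => by
      by_contra hne
      exact Set.disjoint_left.1 (hdisj _ _ (hoo i j hne)) h h'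
    rcases hσs x s z hz' with h | h <;> rcases hps z hz with h' | h' | ⟨j, hj, h' | h'⟩
    · exact hsx (dB _ _ h' h)
    · exact dAB _ _ h' h
    · exact dAB _ _ h' h
    · exact hxl (dB _ _ h h' ▸ hj)
    · exact dAB _ _ h h'
    · exact hsx (dA _ _ h h')
    · exact hsl (dA _ _ h h' ▸ hj)
    · exact dAB _ _ h h'
  refine ⟨a s, .cons (hab s) (p.append (.cons (hab x) (σ x s))), ?_, ?_⟩
  · rw [SimpleGraph.Walk.cons_isCycle_iff]
    refine ⟨hr, ?_⟩
    -- The edge from `a s` to `b s` lies neither in one of the two paths, which miss one of its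
    -- ends each, nor is it the edge from `a x` to `b x`.
    rw [SimpleGraph.Walk.edges_append, SimpleGraph.Walk.edges_cons, List.mem_append,
      List.mem_cons]
    have hnA : ∀ i, a s ∈ B (e i) → s = i := fun i h => by
      by_contra hne
      exact Set.disjoint_left.1 (hdisj _ _ (hee s i hne)) (ha s) h
    have hnAB : ∀ i, a s ∉ B (o i) := fun i => Set.disjoint_left.1 (hAB s i) (ha s)
    rintro (h | h | h)
    · rcases hps _ (p.fst_mem_support_of_mem_edges h) with h' | h' | ⟨j, hj, h' | h'⟩
      · exact hnAB _ h'
      · exact hsx (hnA _ h')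
      · exact hsl (hnA _ h' ▸ hj)
      · exact hnAB _ h'
    · have : a s ∈ s(a x, b x) := h ▸ Sym2.mem_mk_left _ _
      rcases Sym2.mem_iff.1 this with h' | h'
      · exact hsx (hnA x (h' ▸ ha x))
      · exact hnAB x (h' ▸ hb x)
    · rcases hσs x s _ ((σ x s).snd_mem_support_of_mem_edges h) with h' | h'
      · by_cases hne : s = x
        · exact hsx hne
        · exact Set.disjoint_left.1 (hdisj _ _ (hoo s x hne)) (hb s) h'
      · exact Set.disjoint_left.1 (hAB s s) h' (hb s)
  · rw [← ZMod.natCast_eq_zero_iff, ← hval, SimpleGraph.Walk.length_cons,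
      SimpleGraph.Walk.length_append, SimpleGraph.Walk.length_cons]
    push_cast
    ring
end

section
/- For every prime number p, every Z_p-labelling of the complete digraph on p+1 vertices admits a balanced directed cycle; that is, n(Z_p) ≤ p+1 (and combined with the lower bound, n(Z_p) = p+1). -/
/-- The sum of the labels along the directed path through the vertices of a list. -/
def pathSum {V Γ : Type} [AddMonoid Γ] (γ : V → V → Γ) : List V → Γ
  | [] => 0
  | [_] => 0
  | x :: y :: l => γ x y + pathSum γ (y :: l)

theorem cycleSum_cons {V Γ : Type} [AddMonoid Γ] (γ : V → V → Γ) (a : V) (l : List V) :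
    cycleSum γ (a :: l) = pathSum γ (a :: l ++ [a]) := by
  have key : ∀ (l : List V) (x : V),
      (((x :: l).zip (l ++ [a])).map fun e => γ e.1 e.2).sum = pathSum γ (x :: l ++ [a]) := by
    intro l
    induction l with
    | nil => intro x; simp [pathSum]
    | cons y l ih =>
      intro x
      have := ih y
      simp only [List.cons_append, List.zip_cons_cons, List.map_cons, List.sum_cons, pathSum]
        at this ⊢
      rw [this]
  simpa [cycleSum] using key l a

theorem pathSum_append {V Γ : Type} [AddMonoid Γ] (γ : V → V → Γ) (x : V) (m : List V) :
    ∀ l : List V, pathSum γ (l ++ x :: m) = pathSum γ (l ++ [x]) + pathSum γ (x :: m)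
  | [] => by simp [pathSum]
  | [a] => by simp [pathSum]
  | a :: b :: l => by
    have := pathSum_append γ x m (b :: l)
    simp only [List.cons_append, pathSum] at this ⊢
    rw [this, add_assoc]

/-- The sums of the paths from `v` to `y` all of whose vertices after `v` lie in `W`. It is only
used for `v ∉ W`, so that these paths have no repeated vertex. -/
def pathSums {V Γ : Type} [AddMonoid Γ] (γ : V → V → Γ) (v : V) (W : Finset V) (y : V) : Set Γ :=
  {a | ∃ l : List V, (l ++ [y]).Nodup ∧ (∀ x ∈ l ++ [y], x ∈ W) ∧ pathSum γ (v :: l ++ [y]) = a}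

theorem pathSums_mono {V Γ : Type} [AddMonoid Γ] (γ : V → V → Γ) (v : V) {W W' : Finset V}
    (h : W ⊆ W') (y : V) : pathSums γ v W y ⊆ pathSums γ v W' y := by
  rintro a ⟨l, h1, h2, h3⟩
  exact ⟨l, h1, fun x hx => h (h2 x hx), h3⟩

theorem pathSums_extend {V Γ : Type} [DecidableEq V] [AddMonoid Γ] (γ : V → V → Γ) (v : V)
    {W : Finset V} {w y : V} (hw : w ∈ W) {a : Γ} (ha : a ∈ pathSums γ v (W.erase w) y) :
    a + γ y w ∈ pathSums γ v W w := by
  obtain ⟨l, h1, h2, h3⟩ := ha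
  refine ⟨l ++ [y], ?_, ?_, ?_⟩
  · rw [List.nodup_append]
    refine ⟨h1, by simp, ?_⟩
    intro x hx z hz
    rw [List.mem_singleton.1 hz]
    exact (Finset.mem_erase.1 (h2 x hx)).1
  · intro x hx
    rcases List.mem_append.1 hx with hx | hx
    · exact (Finset.mem_erase.1 (h2 x hx)).2
    · rwa [List.mem_singleton.1 hx]
  · have := pathSum_append γ y [w] (v :: l)
    simp only [List.cons_append, List.append_assoc, List.nil_append] at this h3 ⊢
    rw [this, h3]
    simp [pathSum]

/-- If `T (f w) + γ(f w, w) ⊆ T w` for all `w ∈ W`, then a cycle of `f` in `W` yields a directed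
cycle whose sum is a period of some `T w`. -/
theorem exists_cycle_shift {V Γ : Type} [AddCommGroup Γ] (γ : V → V → Γ) (W : Finset V)
    (hW : W.Nonempty) (f : V → V) (hf : ∀ w ∈ W, f w ∈ W) (hne : ∀ w ∈ W, f w ≠ w)
    (T : V → Set Γ) (hT : ∀ w ∈ W, ∀ a ∈ T (f w), a + γ (f w) w ∈ T w) :
    ∃ c : List V, 2 ≤ c.length ∧ c.Nodup ∧ ∃ w ∈ W, ∀ a ∈ T w, a + cycleSum γ c ∈ T w := by
  obtain ⟨w₀, hw₀⟩ := hW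
  have hit : ∀ n, ∀ w ∈ W, f^[n] w ∈ W := fun n w hw =>
    (Set.MapsTo.iterate (s := (W : Set V)) (f := f) (fun x hx => hf x hx) n) hw
  obtain ⟨w, hw, hper⟩ : ∃ w ∈ W, w ∈ Function.periodicPts f := by
    obtain ⟨m, n, hmn, h⟩ := Finite.exists_ne_map_eq_of_infinite
      (fun n : ℕ => (⟨f^[n] w₀, hit n w₀ hw₀⟩ : W))
    replace h : f^[m] w₀ = f^[n] w₀ := congrArg Subtype.val h
    wlog hlt : m < n generalizing m n
    · exact this n m hmn.symm h.symm (by omega)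
    refine ⟨f^[m] w₀, hit m w₀ hw₀, Function.mk_mem_periodicPts (n := n - m) (by omega) ?_⟩
    rw [Function.IsPeriodicPt, Function.IsFixedPt, ← Function.iterate_add_apply,
      Nat.sub_add_cancel hlt.le, h]
  have hpos := Function.minimalPeriod_pos_of_mem_periodicPts hper
  have hfix : f^[Function.minimalPeriod f w] w = w := Function.iterate_minimalPeriod
  have hinj := Function.iterate_injOn_Iio_minimalPeriod (f := f) (x := w)
  obtain ⟨k, hk⟩ : ∃ k, Function.minimalPeriod f w = k + 1 := ⟨_, (Nat.succ_pred_eq_of_pos hpos).symm⟩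
  rw [hk] at hfix hinj
  have hk0 : k ≠ 0 := by
    rintro rfl
    exact hne w hw hfix
  -- `L n` is the list `f^[n] w, …, f w, w`.
  let L : ℕ → List V := fun n => ((List.range (n + 1)).map fun i => f^[i] w).reverse
  have Lsucc : ∀ n, L (n + 1) = f^[n + 1] w :: L n := by
    intro n
    simp only [L]
    rw [List.range_succ (n := n + 1)]
    simp
  have Lcons : ∀ n, ∃ l, L n = f^[n] w :: l := by
    rintro (_ | n)
    · exact ⟨[], by simp [L]⟩
    · exact ⟨_, Lsucc n⟩
  have Lsnoc : ∀ n, ∃ l, L n = l ++ [w] := by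
    intro n
    induction n with
    | zero => exact ⟨[], by simp [L]⟩
    | succ n ih =>
      obtain ⟨l, hl⟩ := ih
      exact ⟨f^[n + 1] w :: l, by rw [Lsucc, hl]; rfl⟩
  have shift : ∀ n, ∀ a ∈ T (f^[n] w), a + pathSum γ (L n) ∈ T w := by
    intro n
    induction n with
    | zero => intro a ha; simpa [L, pathSum] using ha
    | succ n ih =>
      intro a ha
      rw [Function.iterate_succ_apply'] at ha
      have := ih _ (hT _ (hit n w hw) a ha)
      obtain ⟨l, hl⟩ := Lcons n
      rw [Lsucc, hl, pathSum, ← hl, ← add_assoc, Function.iterate_succ_apply']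
      exact this
  refine ⟨L k, by simp [L]; omega, ?_, w, hw, ?_⟩
  · refine List.nodup_reverse.2 (List.Nodup.map_on ?_ List.nodup_range)
    intro i hi j hj hij
    exact hinj (List.mem_range.1 hi) (List.mem_range.1 hj) hij
  · intro a ha
    obtain ⟨l, hl⟩ := Lcons k
    obtain ⟨l', hl'⟩ := Lsnoc k
    have hsum : cycleSum γ (L k) = γ w (f^[k] w) + pathSum γ (L k) := by
      rw [hl, cycleSum_cons, ← hl, hl', List.append_assoc, List.singleton_append,
        pathSum_append, add_comm]
      simp [pathSum]
    rw [hsum, ← add_assoc]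
    apply shift
    have hff : f (f^[k] w) = w := by rw [← Function.iterate_succ_apply' f, hfix]
    have := hT _ (hit k w hw) a (by rwa [hff])
    rwa [hff] at this

/-- A nonempty subset of `ZMod p` closed under adding a nonzero element is everything. -/
theorem eq_univ_of_shift {p : ℕ} [Fact p.Prime] (S : Set (ZMod p)) (hS : S.Nonempty)
    (s : ZMod p) (hs : s ≠ 0) (h : ∀ a ∈ S, a + s ∈ S) : S = Set.univ := by
  obtain ⟨a, ha⟩ := hS
  have key : ∀ n : ℕ, a + n * s ∈ S := by
    intro n
    induction n with
    | zero => simpa using ha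
    | succ n ih =>
      have := h _ ih
      convert this using 1
      push_cast
      ring
  refine Set.eq_univ_of_forall fun b => ?_
  have := key ((b - a) / s).val
  rwa [ZMod.natCast_zmod_val, div_mul_cancel₀ _ hs, add_sub_cancel] at this

theorem exists_large {p : ℕ} [Fact p.Prime] {V : Type} [DecidableEq V] (γ : V → V → ZMod p)
    (hγ : ¬ ∃ c : List V, IsBalancedCycleAdd γ c) (v : V) (n : ℕ) :
    ∀ W : Finset V, W.card = n + 1 → n + 1 ≤ p →
      ∃ y ∈ W, n + 1 ≤ (pathSums γ v W y).ncard := by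
  induction n with
  | zero =>
    intro W hW _
    obtain ⟨y, rfl⟩ := Finset.card_eq_one.1 hW
    refine ⟨y, by simp, ?_⟩
    rw [zero_add, Nat.one_le_iff_ne_zero, ← Nat.pos_iff_ne_zero, Set.ncard_pos (Set.toFinite _)]
    exact ⟨_, [], by simp, by simp, rfl⟩
  | succ n ih =>
    intro W hW hp
    by_contra! hsmall
    have hex : ∀ w ∈ W, ∃ y ∈ W.erase w, n + 1 ≤ (pathSums γ v (W.erase w) y).ncard :=
      fun w hw => ih _ (by rw [Finset.card_erase_of_mem hw, hW]; rfl) (by omega)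
    choose! f hf hcard using hex
    have hfW : ∀ w ∈ W, f w ∈ W := fun w hw => (Finset.mem_erase.1 (hf w hw)).2
    have hT : ∀ w ∈ W, ∀ a ∈ pathSums γ v W (f w), a + γ (f w) w ∈ pathSums γ v W w := by
      intro w hw a ha
      have heq := Set.eq_of_subset_of_ncard_le
        (pathSums_mono γ v (Finset.erase_subset w W) (f w))
        (by have := hsmall _ (hfW w hw); have := hcard w hw; omega)
      rw [← heq] at ha
      exact pathSums_extend γ v hw ha
    obtain ⟨c, hc2, hcn, w, hw, hc⟩ := exists_cycle_shift γ W
      (Finset.card_pos.1 (by omega)) f hfW (fun w hw => (Finset.mem_erase.1 (hf w hw)).1) _ hT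
    have hs : cycleSum γ c ≠ 0 := fun h => hγ ⟨c, hc2, hcn, h⟩
    obtain ⟨a, ha⟩ : (pathSums γ v (W.erase w) (f w)).Nonempty := by
      rw [← Set.ncard_pos (Set.toFinite _)]
      have := hcard w hw
      omega
    have huniv := eq_univ_of_shift _ ⟨_, pathSums_extend γ v hw ha⟩ _ hs hc
    have := hsmall w hw
    rw [huniv, Set.ncard_univ, Nat.card_zmod] at this
    omega

theorem pathSum_natCast {V Γ : Type} [AddMonoidWithOne Γ] (g : V → V → ℕ) :
    ∀ l : List V, pathSum (fun x y => (g x y : Γ)) l = (pathSum g l : ℕ)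
  | [] => by simp [pathSum]
  | [_] => by simp [pathSum]
  | x :: y :: l => by simp [pathSum, pathSum_natCast g (y :: l)]

/-- The number `1` on ascending arcs and `0` on all others, so that path sums count ascents. -/
def ascent {p : ℕ} (i j : Fin p) : ℕ := if i < j then 1 else 0

theorem pathSum_ascent_le {p : ℕ} (l : List (Fin p)) :
    ∀ x, pathSum ascent (x :: l) ≤ l.length := by
  induction l with
  | nil => simp [pathSum]
  | cons y l ih =>
    intro x
    have := ih y
    simp only [pathSum, ascent, List.length_cons]
    split_ifs <;> omega

theorem le_of_pathSum_ascent_eq_zero {p : ℕ} (l : List (Fin p)) :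
    ∀ x, pathSum ascent (x :: l) = 0 → ∀ y ∈ l, y ≤ x := by
  induction l with
  | nil => simp
  | cons z l ih =>
    intro x h y hy
    simp only [pathSum, ascent] at h
    split_ifs at h with hxz
    · omega
    · have hzx := not_lt.1 hxz
      rcases List.mem_cons.1 hy with rfl | hy
      · exact hzx
      · exact (ih z (by simpa using h) y hy).trans hzx

theorem lt_of_pathSum_ascent_eq_length {p : ℕ} (l : List (Fin p)) :
    ∀ x, pathSum ascent (x :: l) = l.length → ∀ y ∈ l, x < y := by
  induction l with
  | nil => simp
  | cons z l ih =>
    intro x h y hy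
    have hle := pathSum_ascent_le l z
    simp only [pathSum, ascent, List.length_cons] at h
    split_ifs at h with hxz
    · rcases List.mem_cons.1 hy with rfl | hy
      · exact hxz
      · exact hxz.trans (ih z (by omega) y hy)
    · omega

/-- For every prime `p`, every `ℤ_p`-labelling of the complete
digraph on `p + 1` vertices admits a balanced cycle (so `n(ℤ_p) ≤ p + 1`); moreover
there is a `ℤ_p`-labelling of the complete digraph on `p` vertices with no balanced
cycle, hence `n(ℤ_p) = p + 1`. -/
theorem n_zmod_p_eq (p : ℕ) (hp : p.Prime) :
    (∀ γ : Fin (p + 1) → Fin (p + 1) → ZMod p,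
      ∃ c : List (Fin (p + 1)), IsBalancedCycleAdd γ c) ∧
    (∃ γ : Fin p → Fin p → ZMod p,
      ¬ ∃ c : List (Fin p), IsBalancedCycleAdd γ c) := by
  have : Fact p.Prime := ⟨hp⟩
  constructor
  · intro γ
    by_contra hγ
    have hp1 : p - 1 + 1 = p := Nat.succ_pred_eq_of_pos hp.pos
    obtain ⟨y, -, hcard⟩ := exists_large γ hγ 0 (p - 1) (Finset.univ.erase 0)
      (by simp [hp1]) hp1.le
    have huniv : pathSums γ 0 (Finset.univ.erase 0) y = Set.univ :=
      Set.eq_of_subset_of_ncard_le (Set.subset_univ _)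
        (by rw [Set.ncard_univ, Nat.card_zmod]; omega)
    obtain ⟨l, h1, h2, h3⟩ : -γ y 0 ∈ pathSums γ 0 (Finset.univ.erase 0) y := by
      rw [huniv]; trivial
    refine hγ ⟨0 :: (l ++ [y]), by simp, List.nodup_cons.2 ⟨?_, h1⟩, ?_⟩
    · intro h
      simpa using h2 0 h
    · have := pathSum_append γ y [0] (0 :: l)
      rw [cycleSum_cons]
      simp only [List.cons_append, List.append_assoc, List.nil_append] at this h3 ⊢
      rw [this, h3]
      simp [pathSum]
  · refine ⟨fun i j => (ascent i j : ℕ), ?_⟩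
    rintro ⟨c, hc2, hcn, hc⟩
    match c, hc2 with
    | a :: b :: l, _ =>
      have hlen := hcn.length_le_card
      rw [Fintype.card_fin] at hlen
      have hab : a ≠ b := fun h => by simp [h] at hcn
      rw [cycleSum_cons, pathSum_natCast, ZMod.natCast_eq_zero_iff] at hc
      simp only [List.cons_append, List.length_cons] at hc hlen
      have hle := pathSum_ascent_le (b :: (l ++ [a])) a
      simp only [List.length_cons, List.length_append, List.length_nil] at hle
      -- No ascent at all would give `a ≥ b ≥ a`.
      have hne0 : pathSum ascent (a :: b :: (l ++ [a])) ≠ 0 := by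
        intro h
        have h1 := le_of_pathSum_ascent_eq_zero _ _ h b (by simp)
        have h2 : pathSum ascent (b :: (l ++ [a])) = 0 := by
          rw [pathSum] at h; omega
        exact hab (le_antisymm (le_of_pathSum_ascent_eq_zero _ _ h2 a (by simp)) h1)
      -- Only ascents would give `a < a`.
      have hnel : pathSum ascent (a :: b :: (l ++ [a])) ≠ (b :: (l ++ [a])).length := fun h =>
        lt_irrefl a (lt_of_pathSum_ascent_eq_length _ _ h a (by simp))
      simp only [List.length_cons, List.length_append, List.length_nil] at hnel
      have := Nat.le_of_dvd (Nat.pos_of_ne_zero hne0) hc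
      omega
end

section
/- Let S be a subset of a group Γ, let x ∈ Γ with x ∉ stab_l(S), and set S' := {1,x}·S = S ∪ x·S. Then stab_r(S) ⊆ stab_r(S') and |S'| ≥ |S| + |stab_r(S)|. -/
/-!
Right translation by an element of `stabr S` preserves `S`, hence also `x * S`, hence their union.
Since `S` is finite and `x * S ≠ S` has the same size, some `t ∈ x * S` lies outside `S`. The whole
translate `t * stabr S` then lies in `x * S` and avoids `S`, which gives `|stabr S|` new elements.
-/

/-- The left stabilizer `stab_l(S) = {g : g·S = S}` of a subset `S` of a group. -/
def stabl {Γ : Type} [Group Γ] (S : Set Γ) : Set Γ :=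
  {g | (fun s => g * s) '' S = S}

/-- The right stabilizer `stab_r(S) = {g : S·g = S}` of a subset `S` of a group. -/
def stabr {Γ : Type} [Group Γ] (S : Set Γ) : Set Γ :=
  {g | (fun s => s * g) '' S = S}

theorem mul_mem_iff_of_mem_stabr {Γ : Type} [Group Γ] {S : Set Γ} {g : Γ} (hg : g ∈ stabr S)
    (a : Γ) : a * g ∈ S ↔ a ∈ S := by
  have h : (fun s => s * g) '' S = S := hg
  constructor
  · intro ha
    rw [← h] at ha
    obtain ⟨s, hs, hsa⟩ := ha
    rwa [← mul_right_cancel hsa]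
  · intro ha
    rw [← h]
    exact ⟨a, ha, rfl⟩

/-- Let `S` be a (finite) subset of a group `Γ` and `x ∉ stab_l(S)`.
Set `S' := {1, x}·S = S ∪ x·S`. Then `stab_r(S) ⊆ stab_r(S')` and
`|S'| ≥ |S| + |stab_r(S)|`. -/
theorem add_two_elements {Γ : Type} [Group Γ] (S : Set Γ) (hS : S.Finite)
    (x : Γ) (hx : x ∉ stabl S) :
    stabr S ⊆ stabr (S ∪ (fun s => x * s) '' S) ∧
    S.ncard + (stabr S).ncard ≤ (S ∪ (fun s => x * s) '' S).ncard := by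
  constructor
  · intro g hg
    have h : (fun s => s * g) '' S = S := hg
    change (fun s => s * g) '' (S ∪ (fun s => x * s) '' S) = _
    -- Left and right translations commute, so `(x * S) * g = x * (S * g)`.
    have hcomm : (fun s => s * g) '' ((fun s => x * s) '' S)
        = (fun s => x * s) '' ((fun s => s * g) '' S) := by
      simp only [Set.image_image, mul_assoc]
    rw [Set.image_union, hcomm, h]
  · obtain ⟨s, hs, ht⟩ : ∃ s ∈ S, x * s ∉ S := by
      by_contra! hsub
      refine hx (Set.eq_of_subset_of_ncard_le (Set.image_subset_iff.2 hsub) ?_ hS)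
      rw [Set.ncard_image_of_injective S (mul_right_injective x)]
    have hT : (fun g => x * s * g) '' stabr S ⊆ (fun s => x * s) '' S := by
      rintro _ ⟨g, hg, rfl⟩
      exact ⟨s * g, (mul_mem_iff_of_mem_stabr hg s).2 hs, (mul_assoc x s g).symm⟩
    have hdisj : Disjoint S ((fun g => x * s * g) '' stabr S) := by
      rw [Set.disjoint_right]
      rintro _ ⟨g, hg, rfl⟩ hmem
      exact ht ((mul_mem_iff_of_mem_stabr hg (x * s)).1 hmem)
    have hfin := hS.image (fun s => x * s)
    rw [← Set.ncard_image_of_injective (stabr S) (mul_right_injective (x * s)),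
      ← Set.ncard_union_eq hdisj hS (hfin.subset hT)]
    exact Set.ncard_le_ncard (Set.union_subset_union_right S hT) (hS.union hfin)
end
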